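/- Let X, Y, A, B be finite nonempty sets, let H_R be a separable complex Hilbert space, let ξ ∈ ℂ^{X×Y} ⊗ H_R be a unit vector, and let P be an orthogonal projection on ℂ^{A×B} ⊗ H_R of finite rank n ≥ 1. Define, for a class 𝒞 of linear maps M_{X×Y} → M_{A×B}, the value ω_𝒞(ξ,P) = sup_{Γ∈𝒞} Tr((Γ ⊗ id)(ξξ*) P), where (Γ ⊗ id)(ξξ*) is the (finite-rank) operator obtained by applying Γ to the M_{X×Y} leg of the rank-one operator ξξ*. Then ω_{Q_qc}(ξ,P) ≤ 4n · ω_{Q_q}(ξ,P), where Q_qc and Q_q denote the quantum commuting and quantum QNS correlation classes over (X,Y,A,B). -/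

import Mathlib

open Matrix ContinuousLinearMap
open scoped Kronecker ComplexOrder ComplexInnerProductSpace

/-- A bundled complex Hilbert space. -/
structure HilbertC : Type 1 where
  carrier : Type
  [nacg : NormedAddCommGroup carrier]
  [ips : InnerProductSpace ℂ carrier]
  [cs : CompleteSpace carrier]

attribute [instance] HilbertC.nacg HilbertC.ips HilbertC.cs

/-- A stochastic operator matrix over `(X, A)` acting on a Hilbert space `H`. -/
def IsStochasticOperatorMatrix {X A : Type*} [Fintype X] [Fintype A] [DecidableEq X]
    {H : Type*} [NormedAddCommGroup H] [InnerProductSpace ℂ H]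
    (E : X → X → A → A → (H →L[ℂ] H)) : Prop :=
  (∀ ξ : X × A → H,
    0 ≤ ∑ p : X × A, ∑ q : X × A, (⟪ξ p, (E p.1 q.1 p.2 q.2) (ξ q)⟫ : ℂ)) ∧
  (∀ x x' : X, ∑ a : A, E x x' a a = if x = x' then 1 else 0)

/-- Quantum commuting QNS correlations over `(X, Y, A, B)`. -/
def IsQCCorrelation {X Y A B : Type} [Fintype X] [Fintype Y] [Fintype A] [Fintype B]
    [DecidableEq X] [DecidableEq Y]
    (Γ : Matrix (X × Y) (X × Y) ℂ →ₗ[ℂ] Matrix (A × B) (A × B) ℂ) : Prop :=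
  ∃ (ℍ : HilbertC) (ξ : ℍ.carrier)
    (E : X → X → A → A → (ℍ.carrier →L[ℂ] ℍ.carrier))
    (F : Y → Y → B → B → (ℍ.carrier →L[ℂ] ℍ.carrier)),
    ‖ξ‖ = 1 ∧
    IsStochasticOperatorMatrix E ∧ IsStochasticOperatorMatrix F ∧
    (∀ (x x' : X) (y y' : Y) (a a' : A) (b b' : B),
      Commute (E x x' a a') (F y y' b b')) ∧
    (∀ (x x' : X) (y y' : Y),
      Γ ((Matrix.single x x' (1 : ℂ)) ⊗ₖ (Matrix.single y y' (1 : ℂ)))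
        = Matrix.of fun p q => (⟪ξ, ((E x x' p.1 q.1) ∘L (F y y' p.2 q.2)) ξ⟫ : ℂ))

/-- A stochastic operator matrix over `(X, A)` acting on `ℂ^d`, as a family of
matrices. -/
def IsStochasticMatrixFam {X A : Type*} [Fintype X] [Fintype A] [DecidableEq X]
    {d : ℕ} (E : X → X → A → A → Matrix (Fin d) (Fin d) ℂ) : Prop :=
  (Matrix.PosSemidef (Matrix.of
      (fun (p q : (X × A) × Fin d) => E p.1.1 q.1.1 p.1.2 q.1.2 p.2 q.2))) ∧
  (∀ x x' : X, ∑ a : A, E x x' a a = if x = x' then 1 else 0)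

/-- QNS correlations of quantum type over `(X, Y, A, B)`. -/
def IsQCorrelation {X Y A B : Type} [Fintype X] [Fintype Y] [Fintype A] [Fintype B]
    [DecidableEq X] [DecidableEq Y]
    (Γ : Matrix (X × Y) (X × Y) ℂ →ₗ[ℂ] Matrix (A × B) (A × B) ℂ) : Prop :=
  ∃ (dA dB : ℕ)
    (E : X → X → A → A → Matrix (Fin dA) (Fin dA) ℂ)
    (F : Y → Y → B → B → Matrix (Fin dB) (Fin dB) ℂ)
    (ξ : Fin dA × Fin dB → ℂ),
    IsStochasticMatrixFam E ∧ IsStochasticMatrixFam F ∧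
    (∑ i, ‖ξ i‖ ^ 2 = 1) ∧
    (∀ (x x' : X) (y y' : Y),
      Γ ((Matrix.single x x' (1 : ℂ)) ⊗ₖ (Matrix.single y y' (1 : ℂ)))
        = Matrix.of fun p q =>
            dotProduct (star ξ) ((E x x' p.1 q.1 ⊗ₖ F y y' p.2 q.2).mulVec ξ))

/-- The quantity `Tr((Γ ⊗ id)(ξξ*) P)` where `P = Σ_k γ_k γ_k*`. -/
noncomputable def gameValue {X Y A B : Type} [Fintype X] [Fintype Y] [Fintype A] [Fintype B]
    [DecidableEq X] [DecidableEq Y]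
    {HR : Type*} [NormedAddCommGroup HR] [InnerProductSpace ℂ HR]
    (Γ : Matrix (X × Y) (X × Y) ℂ →ₗ[ℂ] Matrix (A × B) (A × B) ℂ)
    (ξ : X × Y → HR) (n : ℕ) (γ : Fin n → (A × B → HR)) : ℂ :=
  ∑ k : Fin n, ∑ p : A × B, ∑ q : A × B, ∑ w : X × Y, ∑ w' : X × Y,
    (Γ (Matrix.single w w' (1 : ℂ))) p q
      * (⟪ξ w', γ k q⟫ : ℂ) * (⟪γ k p, ξ w⟫ : ℂ)


theorem sech_beta (u : ℝ) :
    Complex.betaIntegral (1/2 + Complex.I * (u / Real.pi : ℝ)) (1/2 - Complex.I * (u / Real.pi : ℝ))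
      = (Real.pi / Real.cosh u : ℝ) := by
  have hpi : (Real.pi : ℂ) ≠ 0 := by exact_mod_cast Real.pi_ne_zero
  rw [Complex.betaIntegral_eq_Gamma_mul_div _ _ (by simp) (by simp)]
  have h1 : (1/2 - Complex.I * (u / Real.pi : ℝ) : ℂ) = 1 - (1/2 + Complex.I * (u / Real.pi : ℝ)) := by ring
  rw [h1, Complex.Gamma_mul_Gamma_one_sub]
  rw [add_sub_cancel, Complex.Gamma_one, div_one]
  have h2 : (Real.pi : ℂ) * (1/2 + Complex.I * (u / Real.pi : ℝ)) = u * Complex.I + Real.pi / 2 := by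
    push_cast; field_simp; ring
  rw [h2, Complex.sin_add_pi_div_two, Complex.cos_mul_I]
  push_cast; rfl

theorem beta_integrand (s x : ℝ) (hx : x ∈ Set.Ioo (0:ℝ) 1) :
    (x : ℂ) ^ ((1/2 + Complex.I * s) - 1) * (1 - (x : ℂ)) ^ ((1/2 - Complex.I * s) - 1)
      = ((Real.sqrt x)⁻¹ * (Real.sqrt (1-x))⁻¹ : ℝ) *
        Complex.exp (Complex.I * ((s * (Real.log x - Real.log (1-x)) : ℝ))) := by
  obtain ⟨h0, h1⟩ := hx
  have h1' : 0 < 1 - x := by linarith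
  have e1 : (1 - (x:ℂ)) = ((1 - x : ℝ) : ℂ) := by push_cast; rfl
  rw [e1, Complex.cpow_def_of_ne_zero (by exact_mod_cast h0.ne'),
    Complex.cpow_def_of_ne_zero (by exact_mod_cast h1'.ne'), ← Complex.ofReal_log h0.le,
    ← Complex.ofReal_log h1'.le, ← Complex.exp_add]
  have e2 : ∀ y : ℝ, 0 < y → (Real.sqrt y)⁻¹ = Real.exp (-(1/2) * Real.log y) := by
    intro y hy
    rw [Real.sqrt_eq_rpow, ← Real.rpow_neg hy.le, Real.rpow_def_of_pos hy]; ring_nf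
  rw [e2 x h0, e2 _ h1', ← Real.exp_add, Complex.ofReal_exp, ← Complex.exp_add]
  congr 1
  push_cast; ring

theorem sech_lemma {κ : Type*} [Fintype κ] (a : κ → ℝ) (ha : ∀ k, 0 < a k) (z : κ → ℂ) (M : ℝ)
    (h : ∀ t : ℝ, ‖∑ k, z k * Complex.exp (Complex.I * ((t * Real.log (a k) : ℝ)))‖ ≤ M) :
    ‖∑ k, z k * (2 * a k / (1 + a k ^ 2) : ℝ)‖ ≤ M := by
  have hpi := Real.pi_pos
  set wt : ℝ → ℝ := fun x => (Real.sqrt x)⁻¹ * (Real.sqrt (1-x))⁻¹ with hwt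
  -- key integral formula
  have key : ∀ u : ℝ, ∫ x in (0:ℝ)..1, ((wt x : ℝ) : ℂ) *
      Complex.exp (Complex.I * (((Real.log x - Real.log (1-x)) / Real.pi * u : ℝ)))
      = (Real.pi / Real.cosh u : ℝ) := by
    intro u
    rw [← sech_beta u, Complex.betaIntegral]
    refine intervalIntegral.integral_congr_ae ?_
    have : ∀ᵐ x : ℝ ∂MeasureTheory.volume, x ≠ 1 := by
      simp [MeasureTheory.ae_iff]
    filter_upwards [this] with x hx1 hx
    rw [Set.uIoc_of_le zero_le_one] at hx
    rw [beta_integrand (u / Real.pi) x ⟨hx.1, lt_of_le_of_ne hx.2 hx1⟩]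
    congr 3
    push_cast; ring
  have keyint : ∀ u : ℝ, IntervalIntegrable (fun x => ((wt x : ℝ) : ℂ) *
      Complex.exp (Complex.I * (((Real.log x - Real.log (1-x)) / Real.pi * u : ℝ))))
      MeasureTheory.volume 0 1 := by
    intro u
    have := Complex.betaIntegral_convergent (u := 1/2 + Complex.I * (u / Real.pi : ℝ))
      (v := 1/2 - Complex.I * (u / Real.pi : ℝ)) (by simp) (by simp)
    refine this.congr_ae ?_
    have hne : ∀ᵐ x : ℝ ∂MeasureTheory.volume, x ≠ 1 := by
      simp [MeasureTheory.ae_iff]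
    rw [Set.uIoc_of_le zero_le_one]
    filter_upwards [MeasureTheory.ae_restrict_mem measurableSet_Ioc, MeasureTheory.ae_restrict_of_ae hne]
      with x hx hx1
    rw [beta_integrand (u / Real.pi) x ⟨hx.1, lt_of_le_of_ne hx.2 hx1⟩]
    congr 3
    push_cast; ring
  have hwi : IntervalIntegrable (fun x => wt x) MeasureTheory.volume 0 1 := by
    have := keyint 0
    simp only [mul_zero, Complex.ofReal_zero, Complex.exp_zero, mul_one] at this
    have h2 := this.norm
    refine h2.congr ?_
    intro x hx
    simp only [Complex.norm_real, Real.norm_eq_abs]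
    exact abs_of_nonneg (by positivity)
  have hw1 : ∫ x in (0:ℝ)..1, wt x = Real.pi := by
    have := key 0
    simp only [mul_zero, Complex.ofReal_zero, Complex.exp_zero, mul_one, Real.cosh_zero, div_one] at this
    rw [intervalIntegral.integral_ofReal] at this
    exact_mod_cast this
  have hc : ∀ k, (2 * a k / (1 + a k ^ 2) : ℝ) = 1 / Real.cosh (Real.log (a k)) := by
    intro k
    rw [Real.cosh_eq, Real.exp_neg, Real.exp_log (ha k)]
    have := ha k
    field_simp
    ring
  have hsum : ∑ k, z k * (2 * a k / (1 + a k ^ 2) : ℝ) = (Real.pi : ℂ)⁻¹ *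
      ∫ x in (0:ℝ)..1, ((wt x : ℝ) : ℂ) * ∑ k, z k *
        Complex.exp (Complex.I * (((Real.log x - Real.log (1-x)) / Real.pi * Real.log (a k) : ℝ))) := by
    have : ∀ x : ℝ, ((wt x : ℝ) : ℂ) * ∑ k, z k *
        Complex.exp (Complex.I * (((Real.log x - Real.log (1-x)) / Real.pi * Real.log (a k) : ℝ)))
        = ∑ k, z k * (((wt x : ℝ) : ℂ) *
        Complex.exp (Complex.I * (((Real.log x - Real.log (1-x)) / Real.pi * Real.log (a k) : ℝ)))) := by
      intro x
      rw [Finset.mul_sum]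
      exact Finset.sum_congr rfl fun k _ => by ring
    simp_rw [this]
    rw [intervalIntegral.integral_finsetSum (fun k _ => (keyint _).const_mul _)]
    simp_rw [intervalIntegral.integral_const_mul, key, hc]
    rw [Finset.mul_sum]
    refine Finset.sum_congr rfl fun k _ => ?_
    have hpi' : (Real.pi : ℂ) ≠ 0 := by exact_mod_cast hpi.ne'
    push_cast
    field_simp
  rw [hsum, norm_mul, norm_inv, Complex.norm_real, Real.norm_eq_abs, abs_of_pos hpi,
    inv_mul_le_iff₀ hpi, ← hw1, ← intervalIntegral.integral_mul_const]
  refine intervalIntegral.norm_integral_le_of_norm_le zero_le_one ?_ (hwi.mul_const M)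
  refine Filter.Eventually.of_forall fun x _ => ?_
  rw [norm_mul, Complex.norm_real, Real.norm_eq_abs, abs_of_nonneg (by positivity)]
  exact mul_le_mul_of_nonneg_left (h _) (by positivity)


section qubits
variable {ι : Type*} [Fintype ι] [DecidableEq ι]

/-- Product weight of a bit string. -/
noncomputable def bitW (p : ι → Bool → ℝ) (f : ι → Bool) : ℝ := ∏ i, p i (f i)

/-- The matrix flipping bit `i` from `β` to `!β`. -/
noncomputable def low (β : Bool) (i : ι) : Matrix (ι → Bool) (ι → Bool) ℂ :=
  Matrix.of fun f g => if g i = β ∧ f = Function.update g i (!β) then 1 else 0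

theorem sum_bitW_mul (p : ι → Bool → ℝ) (c : ι → Bool → ℝ) :
    ∑ f : ι → Bool, bitW p f * ∏ i, c i (f i) = ∏ i, ∑ b, p i b * c i b := by
  rw [Finset.prod_univ_sum]
  rw [Fintype.piFinset_univ]
  refine Finset.sum_congr rfl fun f _ => ?_
  rw [bitW, Finset.prod_mul_distrib]

theorem sum_bitW (p : ι → Bool → ℝ) (hp : ∀ i, p i true + p i false = 1) :
    ∑ f : ι → Bool, bitW p f = 1 := by
  have := sum_bitW_mul p (fun _ _ => 1)
  simp only [Finset.prod_const_one, mul_one, Fintype.sum_bool, hp] at this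
  exact this

theorem bit_sum (p : ι → Bool → ℝ) (hp : ∀ i, p i true + p i false = 1) (i : ι) (β : Bool) :
    p i β + p i (!β) = 1 := by
  cases β <;> simp [hp, add_comm (p i false)]

theorem sum_bitW_one (p : ι → Bool → ℝ) (hp : ∀ i, p i true + p i false = 1) (i : ι) (β : Bool) :
    ∑ f : ι → Bool, bitW p f * (if f i = β then 1 else 0) = p i β := by
  have := sum_bitW_mul p (fun m b => if m = i then (if b = β then 1 else 0) else 1)
  have h1 : ∀ f : ι → Bool, (∏ m, (if m = i then (if f m = β then (1:ℝ) else 0) else 1))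
      = if f i = β then 1 else 0 := by
    intro f
    rw [Finset.prod_ite_eq' Finset.univ i]; simp
  simp_rw [h1] at this
  rw [this, Finset.prod_eq_single i]
  · cases β <;> simp
  · intro m _ hm; simp [hm, hp]
  · simp

theorem sum_bitW_two (p : ι → Bool → ℝ) (hp : ∀ i, p i true + p i false = 1) (i j : ι) (hij : i ≠ j)
    (β γ : Bool) :
    ∑ f : ι → Bool, bitW p f * (if f i = β ∧ f j = γ then 1 else 0) = p i β * p j γ := by
  have := sum_bitW_mul p (fun m b => (if m = i then (if b = β then 1 else 0) else 1) *
    (if m = j then (if b = γ then 1 else 0) else 1))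
  have h1 : ∀ f : ι → Bool, (∏ m, ((if m = i then (if f m = β then (1:ℝ) else 0) else 1) *
    (if m = j then (if f m = γ then 1 else 0) else 1)))
      = if f i = β ∧ f j = γ then 1 else 0 := by
    intro f
    rw [Finset.prod_mul_distrib, Finset.prod_ite_eq' Finset.univ i, Finset.prod_ite_eq' Finset.univ j]
    by_cases h : f i = β <;> by_cases h' : f j = γ <;> simp [h, h']
  simp_rw [h1] at this
  rw [this, Finset.prod_eq_mul i j hij]
  · simp only [if_true, hij, hij.symm, if_false, mul_one, one_mul]
    cases β <;> cases γ <;> simp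
  · intro m _ hm; simp [hm.1, hm.2, hp]
  · simp
  · simp

theorem low_conjTranspose (β : Bool) (i : ι) : (low β i)ᴴ = low (!β) i := by
  ext f g
  simp only [conjTranspose_apply, low, of_apply]
  have : (f i = β ∧ g = Function.update f i (!β)) ↔ (g i = !β ∧ f = Function.update g i (!!β)) := by
    rw [Bool.not_not]
    constructor
    · rintro ⟨h1, h2⟩
      subst h2
      subst h1
      simp
    · rintro ⟨h1, h2⟩
      subst h2
      simp [← h1]
  simp only [this]
  split_ifs <;> simp

theorem low_mul (β : Bool) (k l : ι) (g f : ι → Bool) :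
    ((low β k)ᴴ * low β l) g f =
      if g k = β ∧ f l = β ∧ Function.update g k (!β) = Function.update f l (!β) then 1 else 0 := by
  rw [mul_apply]
  simp only [conjTranspose_apply, low, of_apply]
  rw [Finset.sum_eq_single (Function.update f l (!β))]
  · by_cases h1 : g k = β <;> by_cases h2 : f l = β <;>
      by_cases h3 : Function.update g k (!β) = Function.update f l (!β) <;>
      simp [h1, h2, h3, eq_comm]
  · intro h _ hh; simp [hh]
  · simp

theorem low_four (β : Bool) (i j k l : ι) (f : ι → Bool) :
    (((low β i)ᴴ * low β j) * ((low β k)ᴴ * low β l)) f f =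
      if i = j ∧ k = l then (if f i = β ∧ f k = β then 1 else 0)
      else if i = l ∧ j = k then (if f i = β ∧ f j = (!β) then 1 else 0) else 0 := by
  rw [mul_apply]
  simp only [low_mul]
  have hb : (!β) ≠ β := by cases β <;> simp
  by_cases hij : i = j
  · subst hij
    rw [Finset.sum_eq_single f]
    · by_cases hkl : k = l
      · subst hkl; by_cases h1 : f i = β <;> by_cases h2 : f k = β <;> simp [h1, h2]
      · have : ¬ (Function.update f k (!β) = Function.update f l (!β) ∧ f k = β) := by
          rintro ⟨h, h'⟩
          have := congrFun h k
          rw [Function.update_self, Function.update_of_ne hkl, h'] at this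
          exact hb this
        have h2 : ¬ (i = l ∧ i = k) := by rintro ⟨rfl, rfl⟩; exact hkl rfl
        simp only [hkl, and_false, if_false, h2]
        rw [mul_eq_zero]; right
        rw [if_neg]; tauto
    · intro g _ hg
      rw [if_neg, zero_mul]
      rintro ⟨h1, h2, h3⟩
      apply hg
      ext m
      by_cases hm : m = i
      · subst hm; rw [h1, h2]
      · have := congrFun h3 m
        rw [Function.update_of_ne hm, Function.update_of_ne hm] at this
        exact this.symm
    · simp
  · simp only [hij, false_and, if_false]
    rw [Finset.sum_eq_single (Function.update (Function.update f i (!β)) j β)]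
    · set g := Function.update (Function.update f i (!β)) j β with hg
      have gi : g i = !β := by rw [hg, Function.update_of_ne hij, Function.update_self]
      have gj : g j = β := by rw [hg, Function.update_self]
      have gm : ∀ m, m ≠ i → m ≠ j → g m = f m := by
        intro m h1 h2; rw [hg, Function.update_of_ne h2, Function.update_of_ne h1]
      have e1 : (f i = β ∧ g j = β ∧ Function.update f i (!β) = Function.update g j (!β)) ↔
          (f i = β ∧ f j = !β) := by
        constructor
        · rintro ⟨h1, h2, h3⟩
          refine ⟨h1, ?_⟩
          have := congrFun h3 j
          rwa [Function.update_of_ne (Ne.symm hij), Function.update_self] at this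
        · rintro ⟨h1, h2⟩
          refine ⟨h1, gj, ?_⟩
          rw [hg]; ext m
          by_cases hm : m = j
          · subst hm; simp [h2, Function.update_of_ne (Ne.symm hij)]
          · simp [Function.update_of_ne hm]
      simp only [e1]
      by_cases hf : f i = β ∧ f j = !β
      · obtain ⟨fi, fj⟩ := hf
        by_cases hc : i = l ∧ j = k
        · obtain ⟨rfl, rfl⟩ := hc
          have : Function.update g j (!β) = Function.update f i (!β) := by
            ext m
            by_cases hm : m = j
            · subst hm; simp [fj, Function.update_of_ne (Ne.symm hij)]
            · by_cases hm' : m = i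
              · subst hm'; simp [Function.update_of_ne hm, gi]
              · simp [Function.update_of_ne hm, Function.update_of_ne hm', gm m hm' hm]
          simp [fi, fj, gj, this]
        · have : ¬ (g k = β ∧ f l = β ∧ Function.update g k (!β) = Function.update f l (!β)) := by
            rintro ⟨h1, h2, h3⟩
            apply hc
            have hi := congrFun h3 i
            have hj := congrFun h3 j
            have hki : k ≠ i := by rintro rfl; rw [gi] at h1; exact hb h1
            have hlj : l ≠ j := by rintro rfl; rw [fj] at h2; exact hb h2
            constructor
            · by_contra hil
              rw [Function.update_of_ne hki.symm, Function.update_of_ne hil, gi, fi] at hi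
              exact hb hi
            · by_contra hjk
              rw [Function.update_of_ne hjk, Function.update_of_ne hlj.symm, gj, fj] at hj
              exact hb hj.symm
          simp [this, hc]
      · simp only [hf, if_false, zero_mul]
        split_ifs <;> rfl
    · intro g _ hg
      rw [if_neg, zero_mul]
      rintro ⟨h1, h2, h3⟩
      apply hg
      ext m
      by_cases hm : m = j
      · subst hm; simp [h2]
      · have := congrFun h3 m
        rw [Function.update_of_ne hm] at this
        rw [Function.update_of_ne hm, this]
    · simp

theorem low_moment (p : ι → Bool → ℝ) (hp : ∀ i, p i true + p i false = 1) (β : Bool) (i j k l : ι) :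
    ∑ f, (bitW p f : ℂ) * (((low β i)ᴴ * low β j) * ((low β k)ᴴ * low β l)) f f =
      (if i = j ∧ k = l then (p i β * p k β : ℂ) else 0) +
      (if i = l ∧ j = k then (p i β * p j (!β) : ℂ) else 0) := by
  simp only [low_four]
  by_cases h1 : i = j ∧ k = l
  · obtain ⟨rfl, rfl⟩ := h1
    simp only [and_self, if_true]
    by_cases hik : i = k
    · subst hik
      have h := sum_bitW_one p hp i β
      have h2 := bit_sum p hp i β
      simp only [and_self, if_true]
      have h' : (p i β : ℂ) + p i (!β) = 1 := by exact_mod_cast h2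
      rw [← mul_add, h', mul_one]
      rw [← h]; push_cast
      exact Finset.sum_congr rfl fun f _ => by split_ifs <;> simp
    · have h := sum_bitW_two p hp i k hik β β
      simp only [hik, false_and, if_false, add_zero]
      rw [← Complex.ofReal_mul, ← h]; push_cast
      exact Finset.sum_congr rfl fun f _ => by split_ifs <;> simp
  · simp only [h1, if_false, zero_add]
    by_cases h2 : i = l ∧ j = k
    · obtain ⟨rfl, rfl⟩ := h2
      have hij : i ≠ j := by rintro rfl; exact h1 ⟨rfl, rfl⟩
      have h := sum_bitW_two p hp i j hij β (!β)
      simp only [and_self, if_true]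
      rw [← Complex.ofReal_mul, ← h]; push_cast
      exact Finset.sum_congr rfl fun f _ => by split_ifs <;> simp
    · simp [h2]

/-- The overlap in the purified product state. -/
theorem low_overlap (p : ι → Bool → ℝ) (hp : ∀ i, p i true + p i false = 1)
    (hp0 : ∀ i b, 0 ≤ p i b) (i j : ι) :
    ∑ f, ∑ g, (Real.sqrt (bitW p f) : ℂ) * (Real.sqrt (bitW p g) : ℂ) * low true i f g * low true j f g
      = if i = j then (Real.sqrt (p i true * p i false) : ℂ) else 0 := by
  rw [Finset.sum_comm]
  have h1 : ∀ g, ∑ f, (Real.sqrt (bitW p f) : ℂ) * (Real.sqrt (bitW p g) : ℂ) * low true i f g * low true j f g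
      = if i = j ∧ g i = true then ((Real.sqrt (bitW p (Function.update g i false)) * Real.sqrt (bitW p g) : ℝ) : ℂ) else 0 := by
    intro g
    rw [Finset.sum_eq_single (Function.update g i false)]
    · by_cases hij : i = j
      · subst hij
        by_cases hg : g i = true <;> simp [low, hg]
      · by_cases hg : g i = true
        · have : ¬ (Function.update g i false = Function.update g j false) := by
            intro h
            have := congrFun h i
            rw [Function.update_self, Function.update_of_ne hij, hg] at this
            exact absurd this (by simp)
          simp [low, hij, this]
        · simp [low, hij, hg]
    · intro f _ hf
      simp [low, hf]
    · simp
  simp only [h1]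
  by_cases hij : i = j
  · subst hij
    simp only [true_and, if_true]
    have h2 : ∀ g : ι → Bool, g i = true →
        Real.sqrt (bitW p (Function.update g i false)) * Real.sqrt (bitW p g)
        = Real.sqrt (p i true * p i false) * ∏ m ∈ Finset.univ.erase i, p m (g m) := by
      intro g hg
      rw [bitW, bitW, ← Finset.mul_prod_erase _ _ (Finset.mem_univ i),
        ← Finset.mul_prod_erase _ (fun m => p m (g m)) (Finset.mem_univ i)]
      have : ∏ m ∈ Finset.univ.erase i, p m (Function.update g i false m)
          = ∏ m ∈ Finset.univ.erase i, p m (g m) := by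
        refine Finset.prod_congr rfl fun m hm => ?_
        rw [Function.update_of_ne (Finset.ne_of_mem_erase hm)]
      rw [this, hg, Function.update_self]
      have hn : 0 ≤ ∏ m ∈ Finset.univ.erase i, p m (g m) := Finset.prod_nonneg fun m _ => hp0 _ _
      rw [Real.sqrt_mul (hp0 _ _), Real.sqrt_mul (hp0 _ _), Real.sqrt_mul (hp0 _ _)]
      linear_combination (Real.sqrt (p i true) * Real.sqrt (p i false)) * Real.mul_self_sqrt hn
    have h3 : ∑ g : ι → Bool, (if g i = true then ∏ m ∈ Finset.univ.erase i, p m (g m) else 0) = 1 := by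
      have := sum_bitW_mul (fun m b => if m = i then 1 else p m b)
        (fun m b => if m = i then (if b = true then 1 else 0) else 1)
      have e1 : ∀ g : ι → Bool, bitW (fun m b => if m = i then 1 else p m b) g *
          (∏ m, (if m = i then (if g m = true then (1:ℝ) else 0) else 1)) =
          (if g i = true then ∏ m ∈ Finset.univ.erase i, p m (g m) else 0) := by
        intro g
        rw [Finset.prod_ite_eq' Finset.univ i, bitW, ← Finset.mul_prod_erase _ _ (Finset.mem_univ i)]
        have : ∏ m ∈ Finset.univ.erase i, (if m = i then (1:ℝ) else p m (g m))
          = ∏ m ∈ Finset.univ.erase i, p m (g m) := by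
          refine Finset.prod_congr rfl fun m hm => ?_
          rw [if_neg (Finset.ne_of_mem_erase hm)]
        rw [this]; simp
      simp_rw [e1] at this
      rw [this]
      refine Finset.prod_eq_one fun m _ => ?_
      by_cases hm : m = i
      · simp [hm]
      · simp [hm, hp]
    have h4 : ∀ g : ι → Bool, (if g i = true then ((Real.sqrt (bitW p (Function.update g i false)) * Real.sqrt (bitW p g) : ℝ) : ℂ) else 0)
       = ((Real.sqrt (p i true * p i false) * (if g i = true then ∏ m ∈ Finset.univ.erase i, p m (g m) else 0) : ℝ) : ℂ) := by
      intro g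
      split_ifs with hg
      · rw [h2 g hg]
      · simp
    simp_rw [h4]
    rw [← Complex.ofReal_sum, ← Finset.mul_sum, h3, mul_one]
  · simp [hij]

end qubits


section moments
open scoped MatrixOrder

/-- weighted partial trace -/
noncomputable def ptr {X Q : Type*} [Fintype Q] (W : Q → ℝ) (M : Matrix (X × Q) (X × Q) ℂ) :
    Matrix X X ℂ := Matrix.of fun x x' => ∑ f, (W f : ℂ) * M (x, f) (x', f)

theorem ptr_sum {X Q κ : Type*} [Fintype Q] (W : Q → ℝ) (s : Finset κ)
    (M : κ → Matrix (X × Q) (X × Q) ℂ) : ptr W (∑ k ∈ s, M k) = ∑ k ∈ s, ptr W (M k) := by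
  ext x x'
  simp only [ptr, of_apply, Matrix.sum_apply, Finset.mul_sum]
  rw [Finset.sum_comm]

theorem ptr_kron {X Q : Type*} [Fintype Q] (W : Q → ℝ) (M : Matrix X X ℂ) (N : Matrix Q Q ℂ) :
    ptr W (M ⊗ₖ N) = (∑ f, (W f : ℂ) * N f f) • M := by
  ext x x'
  simp only [ptr, of_apply, kroneckerMap_apply, Matrix.smul_apply, smul_eq_mul, Finset.sum_mul]
  exact Finset.sum_congr rfl fun f _ => by ring

variable {ι : Type*} [Fintype ι] [DecidableEq ι] {X A : Type*} [Fintype X] [Fintype A]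
  [DecidableEq X] [DecidableEq A]

theorem mul_conj_le {K : Matrix A A ℂ} (hK : K ≤ 1) (v : Matrix A X ℂ) :
    vᴴ * K * v ≤ vᴴ * v := by
  rw [Matrix.le_iff] at hK ⊢
  have := hK.conjTranspose_mul_mul_same v
  rwa [Matrix.mul_sub, Matrix.sub_mul, Matrix.mul_one] at this

theorem sq_le_one {K : Matrix X X ℂ} (h0 : 0 ≤ K) (h1 : K ≤ 1) : K * K ≤ 1 := by
  have hH : Kᴴ = K := (nonneg_iff_posSemidef.1 h0).isHermitian
  -- K - K*K = K(1-K)K + (1-K)K(1-K)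
  have e : K - K * K = Kᴴ * (1 - K) * K + (1 - K)ᴴ * K * (1 - K) := by
    rw [conjTranspose_sub, conjTranspose_one, hH]; noncomm_ring
  have : K * K ≤ K := by
    rw [Matrix.le_iff, e]
    exact ((Matrix.le_iff.1 h1).conjTranspose_mul_mul_same K).add
      ((nonneg_iff_posSemidef.1 h0).conjTranspose_mul_mul_same (1 - K))
  exact this.trans h1

theorem moment_eq (p : ι → Bool → ℝ) (hp : ∀ i, p i true + p i false = 1) (β : Bool)
    (v : ι → Matrix A X ℂ) :
    ptr (bitW p) (((∑ i, v i ⊗ₖ low β i)ᴴ * (∑ i, v i ⊗ₖ low β i)) *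
      ((∑ i, v i ⊗ₖ low β i)ᴴ * (∑ i, v i ⊗ₖ low β i))) =
    (∑ i, (p i β : ℂ) • ((v i)ᴴ * v i)) * (∑ i, (p i β : ℂ) • ((v i)ᴴ * v i)) +
    ∑ i, (p i β : ℂ) • ((v i)ᴴ * (∑ j, (p j (!β) : ℂ) • (v j * (v j)ᴴ)) * v i) := by
  have h1 : ((∑ i, v i ⊗ₖ low β i)ᴴ * (∑ i, v i ⊗ₖ low β i)) *
      ((∑ i, v i ⊗ₖ low β i)ᴴ * (∑ i, v i ⊗ₖ low β i)) =
      ∑ i, ∑ j, ∑ k, ∑ l, ((((v i)ᴴ * v j) * ((v k)ᴴ * v l)) ⊗ₖ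
        (((low β i)ᴴ * low β j) * ((low β k)ᴴ * low β l))) := by
    have h0 : (∑ i, v i ⊗ₖ low β i)ᴴ * (∑ i, v i ⊗ₖ low β i) =
       ∑ i, ∑ j, (((v i)ᴴ * v j) ⊗ₖ ((low β i)ᴴ * low β j)) := by
      rw [conjTranspose_sum, Matrix.sum_mul]
      refine Finset.sum_congr rfl fun i _ => ?_
      rw [Matrix.mul_sum]
      refine Finset.sum_congr rfl fun j _ => ?_
      rw [conjTranspose_kronecker, mul_kronecker_mul]
    rw [h0, Finset.sum_mul]
    refine Finset.sum_congr rfl fun i _ => ?_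
    rw [Finset.sum_mul]
    refine Finset.sum_congr rfl fun j _ => ?_
    rw [Finset.mul_sum]
    refine Finset.sum_congr rfl fun k _ => ?_
    rw [Finset.mul_sum]
    refine Finset.sum_congr rfl fun l _ => ?_
    rw [← mul_kronecker_mul]
  rw [h1]
  simp only [ptr_sum, ptr_kron, low_moment p hp, add_smul, Finset.sum_add_distrib, ite_and, ite_smul,
    zero_smul]
  congr 1
  · simp only [Finset.sum_ite_eq, Finset.sum_ite_irrel, Finset.sum_const_zero, Finset.mem_univ, if_true]
    rw [Finset.sum_mul]
    refine Finset.sum_congr rfl fun i _ => ?_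
    rw [Finset.mul_sum]
    refine Finset.sum_congr rfl fun k _ => ?_
    rw [smul_mul_smul_comm]
  · refine Finset.sum_congr rfl fun i _ => ?_
    rw [Matrix.mul_sum, Matrix.sum_mul, Finset.smul_sum]
    refine Finset.sum_congr rfl fun j _ => ?_
    simp only [Finset.sum_ite_eq, Finset.sum_ite_irrel, Finset.sum_const_zero, Finset.mem_univ, if_true]
    rw [Matrix.mul_smul, Matrix.smul_mul, smul_smul]
    simp only [Matrix.mul_assoc]

theorem moment_le (p : ι → Bool → ℝ) (hp : ∀ i, p i true + p i false = 1)
    (hp0 : ∀ i b, 0 ≤ p i b) (β : Bool)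
    (v : ι → Matrix A X ℂ)
    (hK : ∑ i, (p i β : ℂ) • ((v i)ᴴ * v i) ≤ 1)
    (hL : ∑ i, (p i (!β) : ℂ) • (v i * (v i)ᴴ) ≤ 1) :
    ptr (bitW p) (((∑ i, v i ⊗ₖ low β i)ᴴ * (∑ i, v i ⊗ₖ low β i)) *
      ((∑ i, v i ⊗ₖ low β i)ᴴ * (∑ i, v i ⊗ₖ low β i))) ≤ (2 : ℂ) • 1 := by
  rw [moment_eq p hp, two_smul]
  have hs : ∀ i (M : Matrix X X ℂ), 0 ≤ M → 0 ≤ (p i β : ℂ) • M := by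
    intro i M hM
    rw [nonneg_iff_posSemidef] at hM ⊢
    exact hM.smul (by exact_mod_cast hp0 i β)
  refine add_le_add (sq_le_one (Finset.sum_nonneg fun i _ => hs i _ ?_) hK) (le_trans ?_ hK)
  · rw [nonneg_iff_posSemidef]; exact posSemidef_conjTranspose_mul_self _
  · refine Finset.sum_le_sum fun i _ => ?_
    have := hs i _ (sub_nonneg.2 (mul_conj_le hL (v i)))
    rwa [smul_sub, sub_nonneg] at this

end moments


section rounding
open scoped MatrixOrder

theorem exists_spectral {β : Type*} [Fintype β] [DecidableEq β] (H : Matrix β β ℂ)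
    (hH : H.PosSemidef) :
    ∃ (d : β → ℝ) (P : β → Matrix β β ℂ), (∀ k, 0 ≤ d k) ∧ (∀ k, (P k)ᴴ = P k) ∧
      (∀ k l, P k * P l = if k = l then P k else 0) ∧ ∑ k, P k = 1 ∧
      H = ∑ k, (d k : ℂ) • P k := by
  let U : Matrix β β ℂ := hH.isHermitian.eigenvectorUnitary
  have hU1 : Uᴴ * U = 1 := by
    have := Unitary.coe_star_mul_self hH.isHermitian.eigenvectorUnitary
    exact this
  have hU2 : U * Uᴴ = 1 := by
    have := Unitary.coe_mul_star_self hH.isHermitian.eigenvectorUnitary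
    exact this
  refine ⟨hH.isHermitian.eigenvalues, fun k => U * diagonal (Pi.single k 1) * Uᴴ,
    hH.eigenvalues_nonneg, ?_, ?_, ?_, ?_⟩
  · intro k
    rw [conjTranspose_mul, conjTranspose_mul, conjTranspose_conjTranspose, diagonal_conjTranspose,
      ← Matrix.mul_assoc, ← Pi.single_star, star_one]
  · intro k l
    have : U * diagonal (Pi.single k 1) * Uᴴ * (U * diagonal (Pi.single l 1) * Uᴴ)
      = U * (diagonal (Pi.single k 1) * diagonal (Pi.single l 1)) * Uᴴ := by
      calc _ = U * diagonal (Pi.single k 1) * (Uᴴ * U) * diagonal (Pi.single l 1) * Uᴴ := by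
            simp only [Matrix.mul_assoc]
        _ = _ := by rw [hU1]; simp only [Matrix.mul_assoc, Matrix.one_mul]
    rw [this, diagonal_mul_diagonal]
    split_ifs with h
    · subst h
      congr 3
      ext j
      by_cases hj : j = k
      · subst hj; simp
      · simp [hj]
    · have : (fun i => (Pi.single k 1 : β → ℂ) i * (Pi.single l 1 : β → ℂ) i) = 0 := by
        ext j
        by_cases hj : j = k
        · subst hj; simp [h]
        · simp [hj]
      rw [this, diagonal_zero']; simp
  · rw [← Finset.sum_mul, ← Finset.mul_sum]
    have : ∑ k : β, diagonal (Pi.single k (1:ℂ)) = (1 : Matrix β β ℂ) := by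
      ext i j
      simp only [Matrix.sum_apply, diagonal_apply, Matrix.one_apply]
      split_ifs with h
      · simp [Pi.single_apply]
      · simp
    rw [this, Matrix.mul_one, hU2]
  · have h := hH.isHermitian.spectral_theorem
    rw [Unitary.conjStarAlgAut_apply] at h
    have h2 : H = U * diagonal (fun i => (hH.isHermitian.eigenvalues i : ℂ)) * Uᴴ := h
    have : ∑ k : β, ((hH.isHermitian.eigenvalues k : ℝ) : ℂ) • diagonal (Pi.single k (1:ℂ))
        = diagonal (fun i => (hH.isHermitian.eigenvalues i : ℂ)) := by
      ext i j
      simp only [Matrix.sum_apply, diagonal_apply, Matrix.smul_apply]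
      split_ifs with h
      · simp [Pi.single_apply]
      · simp
    conv_lhs => rw [h2, ← this, Finset.mul_sum, Finset.sum_mul]
    refine Finset.sum_congr rfl fun k _ => ?_
    rw [Matrix.mul_smul, Matrix.smul_mul]

/-- The unimodular phases. -/
noncomputable def ph (t s : ℝ) : ℂ := Complex.exp (Complex.I * ((t * Real.log s : ℝ)))

theorem ph_mul_star (t s : ℝ) : star (ph t s) * ph t s = 1 := by
  have : ‖ph t s‖ = 1 := by
    rw [ph, mul_comm, Complex.norm_exp_ofReal_mul_I]
  rw [Complex.star_def, Complex.conj_mul', this]; simp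

theorem exists_polar {α β : Type*} [Fintype α] [Fintype β] [DecidableEq α] [DecidableEq β]
    (M : Matrix α β ℂ) :
    ∃ (s : β → ℝ) (R : β → Matrix α β ℂ), (∀ k, 0 < s k) ∧ ∑ k, R k = M ∧
      (∀ t : ℝ, (∑ k, (((s k)⁻¹ : ℝ) * ph t (s k)) • R k)ᴴ *
        (∑ k, (((s k)⁻¹ : ℝ) * ph t (s k)) • R k) ≤ 1) ∧
      (∀ t : ℝ, (∑ k, ((s k : ℝ) * ph t (s k)) • R k)ᴴ *
        (∑ k, ((s k : ℝ) * ph t (s k)) • R k) = (Mᴴ * M) * (Mᴴ * M)) ∧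
      (∀ t : ℝ, (∑ k, ((s k : ℝ) * ph t (s k)) • R k) *
        (∑ k, ((s k : ℝ) * ph t (s k)) • R k)ᴴ = (M * Mᴴ) * (M * Mᴴ)) := by
  obtain ⟨d, P, hd, hPh, hPm, hP1, hH⟩ := exists_spectral (Mᴴ * M) (posSemidef_conjTranspose_mul_self M)
  have hHP : ∀ l, (Mᴴ * M) * P l = (d l : ℂ) • P l := by
    intro l
    rw [hH, Finset.sum_mul]
    simp [Matrix.smul_mul, hPm]
  have hR : ∀ k l, (M * P k)ᴴ * (M * P l) = if k = l then (d k : ℂ) • P k else 0 := by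
    intro k l
    rw [conjTranspose_mul, hPh]
    calc P k * Mᴴ * (M * P l) = P k * ((Mᴴ * M) * P l) := by simp only [Matrix.mul_assoc]
      _ = _ := by
        rw [hHP, Matrix.mul_smul, hPm]
        split_ifs with h
        · rw [h]
        · simp
  have hR0 : ∀ k, d k = 0 → M * P k = 0 := by
    intro k hk
    have := hR k k
    rw [if_pos rfl, hk, Complex.ofReal_zero, zero_smul] at this
    exact conjTranspose_mul_self_eq_zero.1 this
  have hRR : ∀ k l, (M * P k) * (M * P l)ᴴ = if k = l then M * P k * Mᴴ else 0 := by
    intro k l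
    rw [conjTranspose_mul, hPh]
    calc M * P k * (P l * Mᴴ) = M * (P k * P l) * Mᴴ := by simp only [Matrix.mul_assoc]
      _ = _ := by
        rw [hPm]
        split_ifs with h <;> simp
  have hgen : ∀ c : β → ℂ, (∑ k, c k • (M * P k))ᴴ * (∑ k, c k • (M * P k)) =
      ∑ k, ((star (c k) * c k) * (d k : ℂ)) • P k := by
    intro c
    rw [conjTranspose_sum, Matrix.sum_mul]
    refine Finset.sum_congr rfl fun k _ => ?_
    rw [Matrix.mul_sum]
    simp only [conjTranspose_smul, Matrix.smul_mul, Matrix.mul_smul, hR]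
    simp only [smul_ite, smul_zero, Finset.sum_ite_eq, Finset.mem_univ, if_true, smul_smul]
    congr 1
    ring
  have hgen2 : ∀ c : β → ℂ, (∑ k, c k • (M * P k)) * (∑ k, c k • (M * P k))ᴴ =
      ∑ k, (star (c k) * c k) • (M * P k * Mᴴ) := by
    intro c
    rw [conjTranspose_sum, Matrix.sum_mul]
    refine Finset.sum_congr rfl fun k _ => ?_
    rw [Matrix.mul_sum]
    simp only [conjTranspose_smul, Matrix.smul_mul, Matrix.mul_smul, hRR]
    simp [smul_smul, mul_comm]
  have hcc : ∀ (r t s : ℝ), star ((r : ℂ) * ph t s) * ((r : ℂ) * ph t s) = ((r ^ 2 : ℝ) : ℂ) := by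
    intro r t s
    rw [star_mul']
    calc _ = (star (r : ℂ) * r) * (star (ph t s) * ph t s) := by ring
      _ = _ := by rw [ph_mul_star]; simp [sq]
  have hPpos : ∀ k, 0 ≤ P k := by
    intro k
    have := posSemidef_conjTranspose_mul_self (P k)
    rw [hPh, hPm, if_pos rfl] at this
    exact nonneg_iff_posSemidef.2 this
  let s : β → ℝ := fun k => if d k = 0 then 1 else Real.sqrt (d k)
  have hs : ∀ k, 0 < s k := by
    intro k
    simp only [s]
    split_ifs with h
    · norm_num
    · exact Real.sqrt_pos.2 (lt_of_le_of_ne (hd k) (Ne.symm h))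
  have hs2 : ∀ k, d k ≠ 0 → s k ^ 2 = d k := by
    intro k hk
    simp only [s, if_neg hk]
    exact Real.sq_sqrt (hd k)
  refine ⟨s, fun k => M * P k, hs, ?_, ?_, ?_, ?_⟩
  · rw [← Matrix.mul_sum, hP1, Matrix.mul_one]
  · intro t
    rw [hgen, ← hP1]
    refine Finset.sum_le_sum fun k _ => ?_
    rw [hcc]
    by_cases hk : d k = 0
    · rw [hk]; simpa using hPpos k
    · rw [← Complex.ofReal_mul, inv_pow, hs2 k hk, inv_mul_cancel₀ hk]; simp
  · intro t
    rw [hgen]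
    conv_rhs => rw [hH, Finset.mul_sum]
    refine Finset.sum_congr rfl fun k _ => ?_
    rw [hcc, Matrix.mul_smul, ← hH, hHP, smul_smul]
    by_cases hk : d k = 0
    · rw [hk]; simp
    · rw [hs2 k hk]
  · intro t
    rw [hgen2]
    have : (M * Mᴴ) * (M * Mᴴ) = M * (Mᴴ * M) * Mᴴ := by simp only [Matrix.mul_assoc]
    rw [this]
    conv_rhs => rw [hH, Matrix.mul_sum, Matrix.sum_mul]
    refine Finset.sum_congr rfl fun k _ => ?_
    rw [hcc, Matrix.mul_smul, Matrix.smul_mul]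
    by_cases hk : d k = 0
    · rw [hR0 k hk]; simp
    · rw [hs2 k hk]

theorem bilin_sum {α β α' β' : Type*} [Fintype β] [Fintype β']
    (Φ : Matrix α β ℂ →ₗ[ℂ] Matrix α' β' ℂ →ₗ[ℂ] ℂ) (c : β → ℂ) (R : β → Matrix α β ℂ)
    (c' : β' → ℂ) (R' : β' → Matrix α' β' ℂ) :
    Φ (∑ k, c k • R k) (∑ l, c' l • R' l) = ∑ kl : β × β', (c kl.1 * c' kl.2) * Φ (R kl.1) (R' kl.2) := by
  rw [Fintype.sum_prod_type, map_sum Φ, LinearMap.sum_apply]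
  refine Finset.sum_congr rfl fun k _ => ?_
  rw [map_sum]
  refine Finset.sum_congr rfl fun l _ => ?_
  simp only [map_smul, LinearMap.smul_apply, smul_eq_mul]
  ring

theorem rounding_bound {α β α' β' : Type*} [Fintype α] [Fintype β] [DecidableEq α] [DecidableEq β]
    [Fintype α'] [Fintype β'] [DecidableEq α'] [DecidableEq β']
    (Φ : Matrix α β ℂ →ₗ[ℂ] Matrix α' β' ℂ →ₗ[ℂ] ℂ) (M : Matrix α β ℂ) (M' : Matrix α' β' ℂ)
    (J N : ℝ)
    (hJ : ∀ (S : Matrix α β ℂ) (S' : Matrix α' β' ℂ), Sᴴ * S ≤ 1 → S'ᴴ * S' ≤ 1 → ‖Φ S S'‖ ≤ J)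
    (hN : ∀ (S : Matrix α β ℂ) (S' : Matrix α' β' ℂ),
      Sᴴ * S = (Mᴴ * M) * (Mᴴ * M) → S * Sᴴ = (M * Mᴴ) * (M * Mᴴ) →
      S'ᴴ * S' = (M'ᴴ * M') * (M'ᴴ * M') → S' * S'ᴴ = (M' * M'ᴴ) * (M' * M'ᴴ) →
      ‖Φ S S'‖ ≤ 2 * N) : ‖Φ M M'‖ ≤ J + N / 2 := by
  obtain ⟨s, R, hs, hR, hA, hF, hF'⟩ := exists_polar M
  obtain ⟨s', R', hs', hR', hA', hG, hG'⟩ := exists_polar M'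
  let a : β × β' → ℝ := fun kl => s kl.1 * s' kl.2 / 2
  have ha : ∀ kl, 0 < a kl := fun kl => by
    have := hs kl.1
    have := hs' kl.2
    positivity
  have hph : ∀ (t : ℝ) kl, Complex.exp (Complex.I * ((t * Real.log (a kl) : ℝ)))
      = Complex.exp (Complex.I * ((-(t * Real.log 2) : ℝ))) * (ph t (s kl.1) * ph t (s' kl.2)) := by
    intro t kl
    rw [ph, ph, ← Complex.exp_add, ← Complex.exp_add]
    congr 1
    simp only [a]
    rw [Real.log_div (mul_ne_zero (hs _).ne' (hs' _).ne') two_ne_zero,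
      Real.log_mul (hs _).ne' (hs' _).ne']
    push_cast
    ring
  have hn : ∀ t : ℝ, ‖Complex.exp (Complex.I * ((-(t * Real.log 2) : ℝ)))‖ = 1 := by
    intro t
    rw [mul_comm, Complex.norm_exp_ofReal_mul_I]
  have h1 := sech_lemma a ha (fun kl => (((s kl.1)⁻¹ * (s' kl.2)⁻¹ : ℝ) : ℂ) * Φ (R kl.1) (R' kl.2)) J (by
    intro t
    have := hJ _ _ (hA t) (hA' t)
    rw [bilin_sum] at this
    refine le_trans (le_of_eq ?_) this
    rw [← one_mul ‖∑ kl : β × β', _ * Φ (R kl.1) (R' kl.2)‖, ← hn t, ← norm_mul, Finset.mul_sum]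
    congr 1
    refine Finset.sum_congr rfl fun kl _ => ?_
    rw [hph]
    push_cast
    ring)
  have h2 := sech_lemma a ha (fun kl => ((s kl.1 * s' kl.2 : ℝ) : ℂ) * Φ (R kl.1) (R' kl.2)) (2 * N) (by
    intro t
    have := hN _ _ (hF t) (hF' t) (hG t) (hG' t)
    rw [bilin_sum] at this
    refine le_trans (le_of_eq ?_) this
    rw [← one_mul ‖∑ kl : β × β', _ * Φ (R kl.1) (R' kl.2)‖, ← hn t, ← norm_mul, Finset.mul_sum]
    congr 1
    refine Finset.sum_congr rfl fun kl _ => ?_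
    rw [hph]
    push_cast
    ring)
  have h3 : Φ M M' = (∑ kl : β × β', (((s kl.1)⁻¹ * (s' kl.2)⁻¹ : ℝ) : ℂ) * Φ (R kl.1) (R' kl.2) *
      (2 * a kl / (1 + a kl ^ 2) : ℝ)) + (1 / 4 : ℂ) * ∑ kl : β × β', ((s kl.1 * s' kl.2 : ℝ) : ℂ) * Φ (R kl.1) (R' kl.2) *
      (2 * a kl / (1 + a kl ^ 2) : ℝ) := by
    have := bilin_sum Φ (fun _ => 1) R (fun _ => 1) R'
    simp only [one_smul, hR, hR', mul_one, one_mul] at this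
    rw [this, Finset.mul_sum, ← Finset.sum_add_distrib]
    refine Finset.sum_congr rfl fun kl _ => ?_
    have e : ((s kl.1)⁻¹ * (s' kl.2)⁻¹) * (2 * a kl / (1 + a kl ^ 2))
      + 1 / 4 * ((s kl.1 * s' kl.2) * (2 * a kl / (1 + a kl ^ 2))) = 1 := by
      have h1 := (hs kl.1).ne'
      have h2 := (hs' kl.2).ne'
      have h3 : 1 + a kl ^ 2 ≠ 0 := by positivity
      have h4 : ((s kl.1)⁻¹ * (s' kl.2)⁻¹) * (2 * a kl / (1 + a kl ^ 2))
        + 1 / 4 * ((s kl.1 * s' kl.2) * (2 * a kl / (1 + a kl ^ 2))) =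
        (((s kl.1)⁻¹ * s kl.1) * ((s' kl.2)⁻¹ * s' kl.2) + a kl ^ 2) / (1 + a kl ^ 2) := by
        have h5 : 2 * a kl = s kl.1 * s' kl.2 := by simp only [a]; ring
        have h6 : a kl ^ 2 = 1 / 4 * (s kl.1 * s' kl.2) * (s kl.1 * s' kl.2) := by
          simp only [a]; ring
        rw [h5]
        simp only [div_eq_mul_inv _ (1 + a kl ^ 2)]
        generalize (1 + a kl ^ 2)⁻¹ = D
        generalize (s kl.1)⁻¹ = u
        generalize (s' kl.2)⁻¹ = w
        rw [h6]
        ring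
      rw [h4, inv_mul_cancel₀ h1, inv_mul_cancel₀ h2, mul_one, div_self h3]
    have e2 := congrArg (fun r : ℝ => (r : ℂ) * Φ (R kl.1) (R' kl.2)) e
    simp only [Complex.ofReal_one, one_mul] at e2
    refine e2.symm.trans ?_
    push_cast
    ring
  rw [h3]
  refine (norm_add_le _ _).trans (add_le_add h1 ?_)
  have h5 : ‖(1 / 4 : ℂ)‖ = 1 / 4 := by norm_num
  rw [norm_mul, h5]
  refine le_trans (mul_le_mul_of_nonneg_left h2 (by norm_num)) (by linarith)
end rounding


section simdiag
open scoped MatrixOrder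
variable {I J : Type*} [Fintype I] [DecidableEq I] [Fintype J] [DecidableEq J]

theorem simdiag (P R : Matrix I I ℂ) (hP : P.PosDef) (hR : R.PosDef) :
    ∃ (μ : I → ℝ) (Bm Bi : Matrix I I ℂ), (∀ i, 0 < μ i) ∧ (∀ i, 0 < 1 - μ i) ∧
      Bm * Bi = 1 ∧ Bi * Bm = 1 ∧ P = Bm * diagonal (fun i => (μ i : ℂ)) * Bmᴴ ∧
      R = Bm * diagonal (fun i => ((1 - μ i : ℝ) : ℂ)) * Bmᴴ := by
  have hS : (P + R).PosDef := hP.add hR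
  obtain ⟨T, hT⟩ : ∃ T : Matrix I I ℂ, P + R = Tᴴ * T :=
    CStarAlgebra.nonneg_iff_eq_star_mul_self.mp hS.posSemidef.nonneg
  have hTdet : IsUnit T.det := by
    have := (isUnit_iff_isUnit_det _).1 hS.isUnit
    rw [hT, det_mul] at this
    exact isUnit_of_mul_isUnit_right this
  have h1 : T * T⁻¹ = 1 := mul_nonsing_inv _ hTdet
  have h2 : T⁻¹ * T = 1 := nonsing_inv_mul _ hTdet
  have hinj : ∀ M N : Matrix I I ℂ, M * N = 1 → Function.Injective N.mulVec := by
    intro M N h u v huv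
    have := congrArg M.mulVec huv
    simpa [mulVec_mulVec, h] using this
  have hK : (T⁻¹ᴴ * P * T⁻¹).PosDef := hP.conjTranspose_mul_mul_same (hinj _ _ h1)
  let U : Matrix I I ℂ := hK.isHermitian.eigenvectorUnitary
  have hU1 : Uᴴ * U = 1 := Unitary.coe_star_mul_self hK.isHermitian.eigenvectorUnitary
  have hU2 : U * Uᴴ = 1 := Unitary.coe_mul_star_self hK.isHermitian.eigenvectorUnitary
  have h := hK.isHermitian.spectral_theorem
  rw [Unitary.conjStarAlgAut_apply] at h
  have hKU : T⁻¹ᴴ * P * T⁻¹ = U * diagonal (fun i => (hK.isHermitian.eigenvalues i : ℂ)) * Uᴴ := h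
  set μ := hK.isHermitian.eigenvalues with hμ
  have h3 : Tᴴ * T⁻¹ᴴ = 1 := by rw [← conjTranspose_mul, h2, conjTranspose_one]
  have h4 : T⁻¹ᴴ * Tᴴ = 1 := by rw [← conjTranspose_mul, h1, conjTranspose_one]
  have e1 : P = Tᴴ * U * diagonal (fun i => (μ i : ℂ)) * (Tᴴ * U)ᴴ := by
    rw [conjTranspose_mul, conjTranspose_conjTranspose]
    calc P = (Tᴴ * T⁻¹ᴴ) * P * (T⁻¹ * T) := by rw [h2, h3, Matrix.one_mul, Matrix.mul_one]
      _ = Tᴴ * (T⁻¹ᴴ * P * T⁻¹) * T := by simp only [Matrix.mul_assoc]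
      _ = _ := by rw [hKU]; simp only [Matrix.mul_assoc]
  have e2 : P + R = Tᴴ * U * (Tᴴ * U)ᴴ := by
    rw [conjTranspose_mul, conjTranspose_conjTranspose, hT]
    calc Tᴴ * T = Tᴴ * (U * Uᴴ) * T := by rw [hU2, Matrix.mul_one]
      _ = _ := by simp only [Matrix.mul_assoc]
  have e3 : R = Tᴴ * U * diagonal (fun i => ((1 - μ i : ℝ) : ℂ)) * (Tᴴ * U)ᴴ := by
    have : diagonal (fun i => ((1 - μ i : ℝ) : ℂ)) = 1 - diagonal (fun i => (μ i : ℂ)) := by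
      rw [← diagonal_one, diagonal_sub]; simp
    rw [this, Matrix.mul_sub, Matrix.sub_mul, Matrix.mul_one, ← e1, ← e2]; simp
  have e4 : Tᴴ * U * (Uᴴ * T⁻¹ᴴ) = 1 := by
    calc _ = Tᴴ * (U * Uᴴ) * T⁻¹ᴴ := by simp only [Matrix.mul_assoc]
      _ = _ := by rw [hU2, Matrix.mul_one, h3]
  have e5 : Uᴴ * T⁻¹ᴴ * (Tᴴ * U) = 1 := mul_eq_one_comm.1 e4
  refine ⟨μ, Tᴴ * U, Uᴴ * T⁻¹ᴴ, hK.eigenvalues_pos, ?_, e4, e5, e1, e3⟩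
  intro i
  have hd : (Uᴴ * T⁻¹ᴴ * R * (Uᴴ * T⁻¹ᴴ)ᴴ).PosDef := by
    have := hR.conjTranspose_mul_mul_same (B := (Uᴴ * T⁻¹ᴴ)ᴴ) (hinj (Tᴴ * U)ᴴ _ (by
      rw [← conjTranspose_mul, e5, conjTranspose_one]))
    rwa [conjTranspose_conjTranspose] at this
  have e6 : Uᴴ * T⁻¹ᴴ * R * (Uᴴ * T⁻¹ᴴ)ᴴ = diagonal (fun i => ((1 - μ i : ℝ) : ℂ)) := by
    conv_lhs => rw [e3]
    calc _ = (Uᴴ * T⁻¹ᴴ * (Tᴴ * U)) * diagonal (fun i => ((1 - μ i : ℝ) : ℂ)) *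
          (Uᴴ * T⁻¹ᴴ * (Tᴴ * U))ᴴ := by
            rw [conjTranspose_mul (Uᴴ * T⁻¹ᴴ)]
            simp only [Matrix.mul_assoc]
      _ = _ := by rw [e5]; simp
  rw [e6, posDef_diagonal_iff] at hd
  exact_mod_cast hd i

theorem schur_le {P : Matrix I I ℂ} (hP : P.PosDef) {C : Matrix I J ℂ} {D : Matrix J J ℂ}
    (h : (fromBlocks P C Cᴴ D).PosSemidef) (Bm Bi : Matrix I I ℂ) (ν ρ : I → ℝ) (hν : ∀ i, 0 < ν i)
    (hρ : ∀ i, 0 < ρ i) (h1 : Bm * Bi = 1) (h2 : Bi * Bm = 1)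
    (hPB : P = Bm * diagonal (fun i => (ν i : ℂ)) * Bmᴴ) :
    (D - (diagonal (fun i => (((Real.sqrt (ρ i * ν i))⁻¹ : ℝ) : ℂ)) * Bi * C)ᴴ *
      diagonal (fun i => (ρ i : ℂ)) *
      (diagonal (fun i => (((Real.sqrt (ρ i * ν i))⁻¹ : ℝ) : ℂ)) * Bi * C)).PosSemidef := by
  have := hP.isUnit.invertible
  have := (hP.fromBlocks₁₁ C D).1 h
  suffices hEq : (diagonal (fun i => (((Real.sqrt (ρ i * ν i))⁻¹ : ℝ) : ℂ)) * Bi * C)ᴴ *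
      diagonal (fun i => (ρ i : ℂ)) *
      (diagonal (fun i => (((Real.sqrt (ρ i * ν i))⁻¹ : ℝ) : ℂ)) * Bi * C) = Cᴴ * P⁻¹ * C by
    rw [hEq]; exact this
  have hinv : P⁻¹ = Biᴴ * diagonal (fun i => (((ν i)⁻¹ : ℝ) : ℂ)) * Bi := by
    apply inv_eq_right_inv
    rw [hPB]
    calc _ = Bm * diagonal (fun i => (ν i : ℂ)) * (Bi * Bm)ᴴ * diagonal (fun i => (((ν i)⁻¹ : ℝ) : ℂ)) * Bi := by
          rw [conjTranspose_mul]; simp only [Matrix.mul_assoc]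
      _ = Bm * (diagonal (fun i => (ν i : ℂ)) * diagonal (fun i => (((ν i)⁻¹ : ℝ) : ℂ))) * Bi := by
          rw [h2, conjTranspose_one, Matrix.mul_one]; simp only [Matrix.mul_assoc]
      _ = 1 := by
        rw [diagonal_mul_diagonal]
        have : (fun i => (ν i : ℂ) * (((ν i)⁻¹ : ℝ) : ℂ)) = fun _ => 1 := by
          ext i
          rw [← Complex.ofReal_mul, mul_inv_cancel₀ (hν i).ne', Complex.ofReal_one]
        rw [this, diagonal_one, Matrix.mul_one, h1]
  rw [hinv, conjTranspose_mul, conjTranspose_mul, diagonal_conjTranspose]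
  have hd : diagonal (star fun i => (((Real.sqrt (ρ i * ν i))⁻¹ : ℝ) : ℂ)) * diagonal (fun i => (ρ i : ℂ)) *
    diagonal (fun i => (((Real.sqrt (ρ i * ν i))⁻¹ : ℝ) : ℂ)) = diagonal (fun i => (((ν i)⁻¹ : ℝ) : ℂ)) := by
    rw [diagonal_mul_diagonal, diagonal_mul_diagonal]
    congr 1
    ext i
    simp only [Pi.star_apply, Complex.star_def, Complex.conj_ofReal]
    rw [← Complex.ofReal_mul, ← Complex.ofReal_mul]
    congr 1
    have hh : 0 < ρ i * ν i := mul_pos (hρ i) (hν i)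
    have : (Real.sqrt (ρ i * ν i))⁻¹ * (Real.sqrt (ρ i * ν i))⁻¹ = (ρ i * ν i)⁻¹ := by
      rw [← mul_inv, Real.mul_self_sqrt hh.le]
    calc _ = ((Real.sqrt (ρ i * ν i))⁻¹ * (Real.sqrt (ρ i * ν i))⁻¹) * ρ i := by ring
      _ = _ := by
        rw [this]
        have := (hρ i).ne'
        have := (hν i).ne'
        field_simp
  rw [← hd]
  simp only [Matrix.mul_assoc]

end simdiag


section feas
open scoped MatrixOrder

/-- Sum over the first coordinate. -/
noncomputable def outTr {X A : Type*} [Fintype X] (P : Matrix (X × A) (X × A) ℂ) : Matrix A A ℂ :=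
  Matrix.of fun a a' => ∑ x, P (x, a) (x, a')

/-- Sum over the second coordinate. -/
noncomputable def inTr {X A : Type*} [Fintype A] (P : Matrix (X × A) (X × A) ℂ) : Matrix X X ℂ :=
  Matrix.of fun x x' => ∑ a, P (x, a) (x', a)

variable {X Y A B : Type*} [Fintype X] [Fintype Y] [Fintype A] [Fintype B]
    [DecidableEq X] [DecidableEq Y] [DecidableEq A] [DecidableEq B]

theorem outTr_psd {P : Matrix (X × A) (X × A) ℂ} (h : P.PosSemidef) : (outTr P).PosSemidef := by
  have : outTr P = ∑ x, P.submatrix (fun a => (x, a)) (fun a => (x, a)) := by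
    ext a a'; simp [outTr, Matrix.sum_apply]
  rw [this]
  exact posSemidef_sum _ fun x _ => h.submatrix _

theorem inTr_psd {P : Matrix (X × A) (X × A) ℂ} (h : P.PosSemidef) : (inTr P).PosSemidef := by
  have : inTr P = ∑ a, P.submatrix (fun x => (x, a)) (fun x => (x, a)) := by
    ext a a'; simp [inTr, Matrix.sum_apply]
  rw [this]
  exact posSemidef_sum _ fun x _ => h.submatrix _

theorem outTr_mono {P R : Matrix (X × A) (X × A) ℂ} (h : (R - P).PosSemidef) : outTr P ≤ outTr R := by
  rw [Matrix.le_iff]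
  have : outTr R - outTr P = outTr (R - P) := by ext a a'; simp [outTr]
  rw [this]; exact outTr_psd h

theorem inTr_mono {P R : Matrix (X × A) (X × A) ℂ} (h : (R - P).PosSemidef) : inTr P ≤ inTr R := by
  rw [Matrix.le_iff]
  have : inTr R - inTr P = inTr (R - P) := by ext a a'; simp [inTr]
  rw [this]; exact inTr_psd h

/-- Feasible points of the semidefinite relaxation. -/
def Feas (C : Matrix (X × A) (Y × B) ℂ) : Prop :=
  ∃ (Po Pi : Matrix (X × A) (X × A) ℂ) (Qo Qi : Matrix (Y × B) (Y × B) ℂ),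
    (fromBlocks Po C Cᴴ Qi).PosSemidef ∧ (fromBlocks Pi C Cᴴ Qo).PosSemidef ∧
    outTr Po ≤ 1 ∧ inTr Pi ≤ 1 ∧ outTr Qo ≤ 1 ∧ inTr Qi ≤ 1

/-- pairing -/
noncomputable def pair {I J : Type*} [Fintype I] [Fintype J] (G C : Matrix I J ℂ) : ℂ :=
  ∑ i, ∑ j, G i j * C i j

theorem diag_le_one {α : Type*} [Fintype α] [DecidableEq α] {M : Matrix α α ℂ} (h : M ≤ 1) (i : α) :
    M i i ≤ 1 := by
  have := (Matrix.le_iff.1 h).diag_nonneg (i := i)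
  simpa using this

theorem Feas.norm_le {C : Matrix (X × A) (Y × B) ℂ} (h : Feas C) (i j) : ‖C i j‖ ≤ 1 := by
  obtain ⟨Po, Pi, Qo, Qi, h1, h2, h3, h4, h5, h6⟩ := h
  have hP : Po.PosSemidef := by
    have := h1.submatrix (Sum.inl)
    exact this
  have hQ : Qi.PosSemidef := by
    have := h1.submatrix (Sum.inr)
    exact this
  have hp1 : Po i i ≤ 1 := by
    refine le_trans ?_ (diag_le_one h3 i.2)
    exact Finset.single_le_sum (f := fun x => Po (x, i.2) (x, i.2)) (fun x _ => hP.diag_nonneg)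
      (Finset.mem_univ i.1)
  have hq1 : Qi j j ≤ 1 := by
    refine le_trans ?_ (diag_le_one h6 j.1)
    exact Finset.single_le_sum (f := fun b => Qi (j.1, b) (j.1, b)) (fun x _ => hQ.diag_nonneg)
      (Finset.mem_univ j.2)
  have hp0 : 0 ≤ Po i i := hP.diag_nonneg
  have hq0 : 0 ≤ Qi j j := hQ.diag_nonneg
  have hd := (h1.submatrix ![Sum.inl i, Sum.inr j]).det_nonneg
  rw [det_fin_two] at hd
  simp only [submatrix_apply, cons_val_zero, cons_val_one, fromBlocks_apply₁₁, fromBlocks_apply₁₂,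
    fromBlocks_apply₂₁, fromBlocks_apply₂₂, conjTranspose_apply, Complex.star_def,
    Complex.mul_conj', sub_nonneg] at hd
  have h7 : ((‖C i j‖ ^ 2 : ℝ) : ℂ) ≤ ((1 : ℝ) : ℂ) := by
    push_cast
    calc _ ≤ _ := hd
      _ ≤ 1 * 1 := mul_le_mul hp1 hq1 hq0 zero_le_one
      _ = 1 := one_mul 1
  have h8 : ‖C i j‖ ^ 2 ≤ 1 := by exact_mod_cast h7
  nlinarith [norm_nonneg (C i j)]

theorem Feas.pair_le {C : Matrix (X × A) (Y × B) ℂ} (h : Feas C) (G) :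
    ‖pair G C‖ ≤ ∑ i, ∑ j, ‖G i j‖ := by
  refine (norm_sum_le _ _).trans (Finset.sum_le_sum fun i _ => ?_)
  refine (norm_sum_le _ _).trans (Finset.sum_le_sum fun j _ => ?_)
  rw [norm_mul]
  exact mul_le_of_le_one_right (norm_nonneg _) (h.norm_le i j)

/-- diagonal form of feasible points -/
theorem diag_form (C : Matrix (X × A) (Y × B) ℂ) (Po Pi : Matrix (X × A) (X × A) ℂ)
    (Qo Qi : Matrix (Y × B) (Y × B) ℂ) (hPo : Po.PosDef) (hPi : Pi.PosDef)
    (h1 : (fromBlocks Po C Cᴴ Qi).PosSemidef) (h2 : (fromBlocks Pi C Cᴴ Qo).PosSemidef)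
    (h3 : outTr Po ≤ 1) (h4 : inTr Pi ≤ 1) (h5 : outTr Qo ≤ 1) (h6 : inTr Qi ≤ 1) :
    ∃ (p : X × A → Bool → ℝ) (v : X × A → Matrix A X ℂ) (w : X × A → Matrix B Y ℂ),
      (∀ i, p i true + p i false = 1) ∧ (∀ i b, 0 ≤ p i b) ∧
      ∑ i, (p i true : ℂ) • ((v i)ᴴ * v i) ≤ 1 ∧ ∑ i, (p i false : ℂ) • (v i * (v i)ᴴ) ≤ 1 ∧
      ∑ i, (p i true : ℂ) • ((w i)ᴴ * w i) ≤ 1 ∧ ∑ i, (p i false : ℂ) • (w i * (w i)ᴴ) ≤ 1 ∧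
      ∀ k j, C k j = ∑ i, (Real.sqrt (p i true * p i false) : ℂ) * v i k.2 k.1 * w i j.2 j.1 := by
  obtain ⟨μ, Bm, Bi, hμ, hμ1, hB1, hB2, hPiB, hPoB⟩ := simdiag Pi Po hPi hPo
  set W : Matrix (X × A) (Y × B) ℂ :=
    diagonal (fun i => (((Real.sqrt (μ i * (1 - μ i)))⁻¹ : ℝ) : ℂ)) * Bi * C with hW
  have hs1 := schur_le hPo h1 Bm Bi (fun i => 1 - μ i) μ hμ1 hμ hB1 hB2 hPoB
  have hs2 := schur_le hPi h2 Bm Bi μ (fun i => 1 - μ i) hμ hμ1 hB1 hB2 hPiB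
  have hcomm : (fun i => (((Real.sqrt ((1 - μ i) * μ i))⁻¹ : ℝ) : ℂ)) =
    (fun i => (((Real.sqrt (μ i * (1 - μ i)))⁻¹ : ℝ) : ℂ)) := by
    ext i; rw [mul_comm]
  rw [hcomm] at hs2
  rw [← hW] at hs1 hs2
  have tr_le : ∀ {α : Type _} [Fintype α] [DecidableEq α] {M : Matrix α α ℂ}, Mᵀ ≤ 1 → M ≤ 1 := by
    intro α _ _ M h
    rw [Matrix.le_iff] at h ⊢
    have := h.transpose
    simpa using this
  have tr_le' : ∀ {α : Type _} [Fintype α] [DecidableEq α] {M : Matrix α α ℂ}, Mᵀ ≤ 1 → M ≤ 1 := by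
    intro α _ _ M h
    rw [Matrix.le_iff] at h ⊢
    have := h.transpose
    simpa using this
  have hapl : ∀ (d : X × A → ℂ) k l, (Bm * diagonal d * Bmᴴ) k l = ∑ i, d i * (Bm k i * star (Bm l i)) := by
    intro d k l
    rw [Matrix.mul_apply]
    simp only [mul_diagonal, conjTranspose_apply]
    exact Finset.sum_congr rfl fun i _ => by ring
  have hapl2 : ∀ (d : X × A → ℂ) k l, (Wᴴ * diagonal d * W) k l = ∑ i, d i * (star (W i k) * W i l) := by
    intro d k l
    rw [Matrix.mul_apply]
    simp only [mul_diagonal, conjTranspose_apply]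
    exact Finset.sum_congr rfl fun i _ => by ring
  refine ⟨fun i b => if b then μ i else 1 - μ i, fun i => Matrix.of fun a x => Bm (x, a) i,
    fun i => Matrix.of fun b y => W i (y, b), ?_, ?_, ?_, ?_, ?_, ?_, ?_⟩
  · intro i; simp
  · intro i b; cases b
    · simpa using (hμ1 i).le
    · simpa using (hμ i).le
  · apply tr_le
    refine le_of_eq_of_le ?_ h4
    ext x x'
    simp only [if_true, transpose_apply, Matrix.sum_apply, Matrix.smul_apply, smul_eq_mul,
      Matrix.mul_apply, conjTranspose_apply, of_apply, inTr, hPiB, hapl]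
    rw [Finset.sum_comm]
    refine Finset.sum_congr rfl fun i _ => ?_
    rw [Finset.mul_sum]
    exact Finset.sum_congr rfl fun a _ => by ring
  · refine le_of_eq_of_le ?_ h3
    ext x x'
    simp only [Bool.false_eq_true, if_false, Matrix.sum_apply, Matrix.smul_apply, smul_eq_mul,
      Matrix.mul_apply, conjTranspose_apply, of_apply, outTr, hPoB, hapl]
    rw [Finset.sum_comm]
    refine Finset.sum_congr rfl fun i _ => ?_
    rw [Finset.mul_sum]
  · refine le_trans (le_of_eq ?_) ((inTr_mono hs1).trans h6)
    ext x x'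
    simp only [if_true, Matrix.sum_apply, Matrix.smul_apply, smul_eq_mul,
      Matrix.mul_apply, conjTranspose_apply, of_apply, inTr, hapl2]
    rw [Finset.sum_comm]
    refine Finset.sum_congr rfl fun i _ => ?_
    rw [Finset.mul_sum]
  · apply tr_le'
    refine le_trans (le_of_eq ?_) ((outTr_mono hs2).trans h5)
    ext x x'
    simp only [Bool.false_eq_true, if_false, transpose_apply, Matrix.sum_apply, Matrix.smul_apply, smul_eq_mul,
      Matrix.mul_apply, conjTranspose_apply, of_apply, outTr, hapl2]
    rw [Finset.sum_comm]
    refine Finset.sum_congr rfl fun i _ => ?_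
    rw [Finset.mul_sum]
    exact Finset.sum_congr rfl fun a _ => by ring
  · intro k j
    have : C = Bm * (diagonal (fun i => ((Real.sqrt (μ i * (1 - μ i)) : ℝ) : ℂ)) * W) := by
      rw [hW, ← Matrix.mul_assoc, ← Matrix.mul_assoc, ← Matrix.mul_assoc,
        Matrix.mul_assoc Bm, diagonal_mul_diagonal]
      have : (fun i => ((Real.sqrt (μ i * (1 - μ i)) : ℝ) : ℂ) * (((Real.sqrt (μ i * (1 - μ i)))⁻¹ : ℝ) : ℂ)) = fun _ => 1 := by
        ext i
        rw [← Complex.ofReal_mul, mul_inv_cancel₀ (Real.sqrt_pos.2 (mul_pos (hμ i) (hμ1 i))).ne',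
          Complex.ofReal_one]
      rw [this, diagonal_one, Matrix.mul_one, hB1, Matrix.one_mul]
    conv_lhs => rw [this, Matrix.mul_apply]
    refine Finset.sum_congr rfl fun i _ => ?_
    simp only [diagonal_mul, of_apply, if_true, Bool.false_eq_true, if_false]
    ring

end feas


section amp
open scoped MatrixOrder

/-- amplitudes -/
noncomputable def ampC {X Y A B Q : Type*} [Fintype Q] (ω : Q → ℝ) (S : Matrix (A × Q) (X × Q) ℂ)
    (S' : Matrix (B × Q) (Y × Q) ℂ) : Matrix (X × A) (Y × B) ℂ :=
  Matrix.of fun i j => ∑ f, ∑ g, (ω f : ℂ) * (ω g : ℂ) * S (i.2, f) (i.1, g) * S' (j.2, f) (j.1, g)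

variable {X Y A B : Type*} [Fintype X] [Fintype Y] [Fintype A] [Fintype B]
    [DecidableEq X] [DecidableEq Y] [DecidableEq A] [DecidableEq B]
  {Q : Type*} [Fintype Q] [DecidableEq Q]

/-- bilinear amplitude functional -/
noncomputable def ampPhi (G : Matrix (X × A) (Y × B) ℂ) (ω : Q → ℝ) :
    Matrix (A × Q) (X × Q) ℂ →ₗ[ℂ] Matrix (B × Q) (Y × Q) ℂ →ₗ[ℂ] ℂ :=
  LinearMap.mk₂ ℂ (fun S S' => pair G (ampC ω S S'))
    (by
      intro S T S'
      simp only [pair, ampC, of_apply, ← Finset.sum_add_distrib, Matrix.add_apply, ← mul_add]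
      simp only [mul_add, add_mul])
    (by
      intro c S S'
      simp only [pair, ampC, of_apply, Matrix.smul_apply, smul_eq_mul, Finset.mul_sum]
      refine Finset.sum_congr rfl fun i _ => Finset.sum_congr rfl fun j _ =>
        Finset.sum_congr rfl fun f _ => Finset.sum_congr rfl fun g _ => ?_
      ring)
    (by
      intro S T S'
      simp only [pair, ampC, of_apply, ← Finset.sum_add_distrib, Matrix.add_apply, ← mul_add])
    (by
      intro c S S'
      simp only [pair, ampC, of_apply, Matrix.smul_apply, smul_eq_mul, Finset.mul_sum]
      refine Finset.sum_congr rfl fun i _ => Finset.sum_congr rfl fun j _ =>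
        Finset.sum_congr rfl fun f _ => Finset.sum_congr rfl fun g _ => ?_
      ring)

theorem gram_block {I J K : Type*} [Fintype I] [Fintype J] [Fintype K] (p : I → K → ℂ) (q : J → K → ℂ) :
    (fromBlocks (Matrix.of fun i i' => ∑ k, star (p i k) * p i' k)
      (Matrix.of fun i j => ∑ k, star (p i k) * q j k)
      (Matrix.of fun i j => ∑ k, star (p i k) * q j k)ᴴ
      (Matrix.of fun j j' => ∑ k, star (q j k) * q j' k)).PosSemidef := by
  have := posSemidef_conjTranspose_mul_self (Matrix.of fun (k : K) (s : I ⊕ J) => Sum.elim p q s k)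
  convert this using 1
  ext s t
  rcases s with s | s <;> rcases t with t | t <;>
    simp [Matrix.mul_apply, mul_comm]

theorem half_le {α : Type*} [Fintype α] [DecidableEq α] {M : Matrix α α ℂ}
    (h : M ≤ (2 : ℂ) • 1) : (1 / 2 : ℂ) • M ≤ 1 := by
  rw [Matrix.le_iff] at h ⊢
  have := h.smul (show (0 : ℂ) ≤ 1 / 2 by norm_num [Complex.le_def])
  rw [smul_sub, smul_smul] at this
  norm_num at this ⊢
  exact this

theorem tr_two {α : Type*} [Fintype α] [DecidableEq α] {M : Matrix α α ℂ}
    (h : M ≤ (2 : ℂ) • 1) : Mᵀ ≤ (2 : ℂ) • 1 := by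
  rw [Matrix.le_iff] at h ⊢
  have := h.transpose
  simpa using this

theorem sum_rot {α β γ : Type*} [Fintype α] [Fintype β] [Fintype γ] (F : α → β → γ → ℂ) :
    ∑ a, ∑ f, ∑ g, F a f g = ∑ g, ∑ a, ∑ f, F a f g := by
  rw [Finset.sum_comm' (t' := Finset.univ) (s' := fun _ => Finset.univ) (by simp)]
  conv_rhs => rw [Finset.sum_comm' (t' := Finset.univ) (s' := fun _ => Finset.univ) (by simp)]
  rw [Finset.sum_comm]
  exact Finset.sum_congr rfl fun a _ => Finset.sum_comm

theorem error_feas (ω : Q → ℝ) (S : Matrix (A × Q) (X × Q) ℂ) (S' : Matrix (B × Q) (Y × Q) ℂ)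
    (h1 : ptr (fun f => ω f ^ 2) (Sᴴ * S) ≤ (2 : ℂ) • 1) (h2 : ptr (fun f => ω f ^ 2) (S * Sᴴ) ≤ (2 : ℂ) • 1)
    (h3 : ptr (fun f => ω f ^ 2) (S'ᴴ * S') ≤ (2 : ℂ) • 1)
    (h4 : ptr (fun f => ω f ^ 2) (S' * S'ᴴ) ≤ (2 : ℂ) • 1) :
    Feas ((1 / 2 : ℂ) • ampC ω S S') := by
  have e1 : ampC ω S S' = Matrix.of fun (i : X × A) (j : Y × B) => ∑ k : Q × Q,
      star ((ω k.1 : ℂ) * star (S (i.2, k.1) (i.1, k.2))) * ((ω k.2 : ℂ) * S' (j.2, k.1) (j.1, k.2)) := by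
    ext i j
    simp only [ampC, of_apply, Fintype.sum_prod_type]
    refine Finset.sum_congr rfl fun f _ => Finset.sum_congr rfl fun g _ => ?_
    simp
    ring
  have e2 : ampC ω S S' = Matrix.of fun (i : X × A) (j : Y × B) => ∑ k : Q × Q,
      star ((ω k.2 : ℂ) * star (S (i.2, k.1) (i.1, k.2))) * ((ω k.1 : ℂ) * S' (j.2, k.1) (j.1, k.2)) := by
    ext i j
    simp only [ampC, of_apply, Fintype.sum_prod_type]
    refine Finset.sum_congr rfl fun f _ => Finset.sum_congr rfl fun g _ => ?_
    simp
    ring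
  have g1 := gram_block (fun (i : X × A) (k : Q × Q) => (ω k.1 : ℂ) * star (S (i.2, k.1) (i.1, k.2)))
    (fun (j : Y × B) (k : Q × Q) => ((ω k.2 : ℂ) * S' (j.2, k.1) (j.1, k.2)))
  have g2 := gram_block (fun (i : X × A) (k : Q × Q) => (ω k.2 : ℂ) * star (S (i.2, k.1) (i.1, k.2)))
    (fun (j : Y × B) (k : Q × Q) => ((ω k.1 : ℂ) * S' (j.2, k.1) (j.1, k.2)))
  rw [← e1] at g1
  rw [← e2] at g2
  have hh : star (1 / 2 : ℂ) = 1 / 2 := by simp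
  have g1' := g1.smul (show (0 : ℂ) ≤ 1 / 2 by norm_num [Complex.le_def])
  have g2' := g2.smul (show (0 : ℂ) ≤ 1 / 2 by norm_num [Complex.le_def])
  rw [fromBlocks_smul] at g1' g2'
  refine ⟨_, _, _, _, by rw [conjTranspose_smul, hh]; exact g1',
    by rw [conjTranspose_smul, hh]; exact g2', ?_, ?_, ?_, ?_⟩
  · refine le_of_eq_of_le ?_ (half_le h2)
    ext a a'
    simp only [outTr, ptr, of_apply, Matrix.smul_apply, smul_eq_mul, Matrix.mul_apply,
      conjTranspose_apply, Fintype.sum_prod_type, Finset.mul_sum]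
    rw [Finset.sum_comm]
    refine Finset.sum_congr rfl fun f _ => Finset.sum_congr rfl fun g _ =>
      Finset.sum_congr rfl fun x _ => ?_
    simp
    ring
  · refine le_of_eq_of_le ?_ (half_le (tr_two h1))
    ext a a'
    simp only [inTr, ptr, of_apply, transpose_apply, Matrix.smul_apply, smul_eq_mul, Matrix.mul_apply,
      conjTranspose_apply, Fintype.sum_prod_type, Finset.mul_sum]
    rw [sum_rot]
    refine Finset.sum_congr rfl fun f _ => Finset.sum_congr rfl fun g _ =>
      Finset.sum_congr rfl fun x _ => ?_
    simp
    ring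
  · refine le_of_eq_of_le ?_ (half_le (tr_two h4))
    ext a a'
    simp only [outTr, ptr, of_apply, transpose_apply, Matrix.smul_apply, smul_eq_mul, Matrix.mul_apply,
      conjTranspose_apply, Fintype.sum_prod_type, Finset.mul_sum]
    rw [Finset.sum_comm]
    refine Finset.sum_congr rfl fun f _ => Finset.sum_congr rfl fun g _ =>
      Finset.sum_congr rfl fun x _ => ?_
    simp
    ring
  · refine le_of_eq_of_le ?_ (half_le h3)
    ext a a'
    simp only [inTr, ptr, of_apply, Matrix.smul_apply, smul_eq_mul, Matrix.mul_apply,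
      conjTranspose_apply, Fintype.sum_prod_type, Finset.mul_sum]
    rw [sum_rot]
    refine Finset.sum_congr rfl fun f _ => Finset.sum_congr rfl fun g _ =>
      Finset.sum_congr rfl fun x _ => ?_
    simp
    ring

theorem ampC_kron {ι : Type*} [Fintype ι] [DecidableEq ι] (p : ι → Bool → ℝ)
    (hp : ∀ i, p i true + p i false = 1) (hp0 : ∀ i b, 0 ≤ p i b)
    (v : ι → Matrix A X ℂ) (w : ι → Matrix B Y ℂ) (k : X × A) (j : Y × B) :
    ampC (fun f => Real.sqrt (bitW p f)) (∑ i, v i ⊗ₖ low true i) (∑ i, w i ⊗ₖ low true i) k j =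
      ∑ i, (Real.sqrt (p i true * p i false) : ℂ) * v i k.2 k.1 * w i j.2 j.1 := by
  have h1 : ∀ i i', v i k.2 k.1 * w i' j.2 j.1 * ∑ f, ∑ g, (Real.sqrt (bitW p f) : ℂ) * (Real.sqrt (bitW p g) : ℂ)
      * low true i f g * low true i' f g = if i = i' then
        (Real.sqrt (p i true * p i false) : ℂ) * v i k.2 k.1 * w i j.2 j.1 else 0 := by
    intro i i'
    rw [low_overlap p hp hp0]
    split_ifs with h
    · subst h; ring
    · simp
  have h2 : ∑ i, (Real.sqrt (p i true * p i false) : ℂ) * v i k.2 k.1 * w i j.2 j.1 =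
      ∑ i, ∑ i', v i k.2 k.1 * w i' j.2 j.1 * ∑ f, ∑ g, (Real.sqrt (bitW p f) : ℂ) * (Real.sqrt (bitW p g) : ℂ)
      * low true i f g * low true i' f g := by
    simp only [h1, Finset.sum_ite_eq, Finset.mem_univ, if_true]
  rw [h2]
  simp only [ampC, of_apply, Matrix.sum_apply, kroneckerMap_apply, Finset.mul_sum, Finset.sum_mul]
  have swap : ∀ F : (ι → Bool) → (ι → Bool) → ι → ι → ℂ,
      ∑ f, ∑ g, ∑ i', ∑ i, F f g i i' = ∑ i, ∑ i', ∑ f, ∑ g, F f g i i' := by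
    intro F
    calc _ = ∑ q : (ι → Bool) × (ι → Bool), ∑ r : ι × ι, F q.1 q.2 r.1 r.2 := by
          rw [Fintype.sum_prod_type]
          refine Finset.sum_congr rfl fun f _ => Finset.sum_congr rfl fun g _ => ?_
          rw [Fintype.sum_prod_type, Finset.sum_comm]
      _ = ∑ r : ι × ι, ∑ q : (ι → Bool) × (ι → Bool), F q.1 q.2 r.1 r.2 := Finset.sum_comm
      _ = _ := by
          rw [Fintype.sum_prod_type]
          refine Finset.sum_congr rfl fun f _ => Finset.sum_congr rfl fun g _ => ?_
          rw [Fintype.sum_prod_type]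
  rw [swap]
  refine Finset.sum_congr rfl fun i _ => Finset.sum_congr rfl fun i' _ =>
    Finset.sum_congr rfl fun f _ => Finset.sum_congr rfl fun g _ => ?_
  ring

end amp


section boot
open scoped MatrixOrder

variable {X Y A B : Type} [Fintype X] [Fintype Y] [Fintype A] [Fintype B]
    [DecidableEq X] [DecidableEq Y] [DecidableEq A] [DecidableEq B]

theorem pair_smul (c : ℂ) (G C : Matrix (X × A) (Y × B) ℂ) : pair G (c • C) = c * pair G C := by
  simp only [pair, Finset.mul_sum, Matrix.smul_apply, smul_eq_mul]
  refine Finset.sum_congr rfl fun i _ => Finset.sum_congr rfl fun j _ => ?_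
  ring

theorem ptr_moments {ι : Type*} [Fintype ι] [DecidableEq ι] (p : ι → Bool → ℝ)
    (hp : ∀ i, p i true + p i false = 1) (hp0 : ∀ i b, 0 ≤ p i b)
    (v : ι → Matrix A X ℂ)
    (h1 : ∑ i, (p i true : ℂ) • ((v i)ᴴ * v i) ≤ 1) (h2 : ∑ i, (p i false : ℂ) • (v i * (v i)ᴴ) ≤ 1)
    (S : Matrix (A × (ι → Bool)) (X × (ι → Bool)) ℂ)
    (hS1 : Sᴴ * S = ((∑ i, v i ⊗ₖ low true i)ᴴ * (∑ i, v i ⊗ₖ low true i)) *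
      ((∑ i, v i ⊗ₖ low true i)ᴴ * (∑ i, v i ⊗ₖ low true i)))
    (hS2 : S * Sᴴ = ((∑ i, v i ⊗ₖ low true i) * (∑ i, v i ⊗ₖ low true i)ᴴ) *
      ((∑ i, v i ⊗ₖ low true i) * (∑ i, v i ⊗ₖ low true i)ᴴ)) :
    ptr (fun f => Real.sqrt (bitW p f) ^ 2) (Sᴴ * S) ≤ (2 : ℂ) • 1 ∧
    ptr (fun f => Real.sqrt (bitW p f) ^ 2) (S * Sᴴ) ≤ (2 : ℂ) • 1 := by
  have hw : (fun f => Real.sqrt (bitW p f) ^ 2) = bitW p := by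
    ext f
    exact Real.sq_sqrt (Finset.prod_nonneg fun i _ => hp0 i _)
  rw [hw, hS1, hS2]
  constructor
  · exact moment_le p hp hp0 true v h1 h2
  · have e : (∑ i, v i ⊗ₖ low true i)ᴴ = ∑ i, (v i)ᴴ ⊗ₖ low false i := by
      rw [conjTranspose_sum]
      refine Finset.sum_congr rfl fun i _ => ?_
      rw [conjTranspose_kronecker, low_conjTranspose]; rfl
    have e' : (∑ i, v i ⊗ₖ low true i) = (∑ i, (v i)ᴴ ⊗ₖ low false i)ᴴ := by
      rw [← e, conjTranspose_conjTranspose]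
    rw [e, e']
    refine moment_le p hp hp0 false (fun i => (v i)ᴴ) ?_ ?_
    · simpa using h2
    · simpa using h1

theorem boot_step (G : Matrix (X × A) (Y × B) ℂ) (J N : ℝ)
    (hJ : ∀ (Q : Type) [Fintype Q] [DecidableEq Q] (ω : Q → ℝ), ∑ f, ω f ^ 2 = 1 →
      ∀ (S : Matrix (A × Q) (X × Q) ℂ) (S' : Matrix (B × Q) (Y × Q) ℂ), Sᴴ * S ≤ 1 → S'ᴴ * S' ≤ 1 →
        ‖ampPhi G ω S S'‖ ≤ J)
    (hN : ∀ D : Matrix (X × A) (Y × B) ℂ, Feas D → ‖pair G D‖ ≤ N)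
    (C : Matrix (X × A) (Y × B) ℂ) (Po Pi : Matrix (X × A) (X × A) ℂ)
    (Qo Qi : Matrix (Y × B) (Y × B) ℂ) (hPo : Po.PosDef) (hPi : Pi.PosDef)
    (h1 : (fromBlocks Po C Cᴴ Qi).PosSemidef) (h2 : (fromBlocks Pi C Cᴴ Qo).PosSemidef)
    (h3 : outTr Po ≤ 1) (h4 : inTr Pi ≤ 1) (h5 : outTr Qo ≤ 1) (h6 : inTr Qi ≤ 1) :
    ‖pair G C‖ ≤ J + N / 2 := by
  obtain ⟨p, v, w, hp, hp0, hv1, hv2, hw1, hw2, hC⟩ := diag_form C Po Pi Qo Qi hPo hPi h1 h2 h3 h4 h5 h6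
  have hsum : ∑ f, Real.sqrt (bitW p f) ^ 2 = 1 := by
    rw [← sum_bitW p hp]
    exact Finset.sum_congr rfl fun f _ => Real.sq_sqrt (Finset.prod_nonneg fun i _ => hp0 i _)
  have hCa : C = ampC (fun f => Real.sqrt (bitW p f)) (∑ i, v i ⊗ₖ low true i) (∑ i, w i ⊗ₖ low true i) := by
    ext k j
    rw [ampC_kron p hp hp0, hC]
  have := rounding_bound (ampPhi G (fun f => Real.sqrt (bitW p f))) (∑ i, v i ⊗ₖ low true i)
    (∑ i, w i ⊗ₖ low true i) J N (hJ _ _ hsum) (by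
      intro S S' hS1 hS2 hS3 hS4
      have m1 := ptr_moments p hp hp0 v hv1 hv2 S hS1 hS2
      have m2 := ptr_moments p hp hp0 w hw1 hw2 S' hS3 hS4
      have f := hN _ (error_feas _ S S' m1.1 m1.2 m2.1 m2.2)
      rw [pair_smul, norm_mul] at f
      have h5 : ‖(1 / 2 : ℂ)‖ = 1 / 2 := by norm_num
      rw [h5] at f
      change ‖pair G (ampC _ S S')‖ ≤ 2 * N
      linarith)
  rw [hCa]
  exact this

theorem boot_pert [Nonempty X] [Nonempty A] (G : Matrix (X × A) (Y × B) ℂ) (J N : ℝ)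
    (hJ : ∀ (Q : Type) [Fintype Q] [DecidableEq Q] (ω : Q → ℝ), ∑ f, ω f ^ 2 = 1 →
      ∀ (S : Matrix (A × Q) (X × Q) ℂ) (S' : Matrix (B × Q) (Y × Q) ℂ), Sᴴ * S ≤ 1 → S'ᴴ * S' ≤ 1 →
        ‖ampPhi G ω S S'‖ ≤ J)
    (hN : ∀ D : Matrix (X × A) (Y × B) ℂ, Feas D → ‖pair G D‖ ≤ N)
    (C : Matrix (X × A) (Y × B) ℂ) (hC : Feas C) (ε : ℝ) (h0 : 0 < ε) (h1 : ε < 1) :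
    (1 - ε) * ‖pair G C‖ ≤ J + N / 2 := by
  obtain ⟨Po, Pi, Qo, Qi, hb1, hb2, h3, h4, h5, h6⟩ := hC
  have hPo : Po.PosSemidef := hb1.submatrix Sum.inl
  have hPi : Pi.PosSemidef := hb2.submatrix Sum.inl
  have hQi : Qi.PosSemidef := hb1.submatrix Sum.inr
  have hQo : Qo.PosSemidef := hb2.submatrix Sum.inr
  have c1 : (0 : ℂ) ≤ ((1 - ε : ℝ) : ℂ) := by exact_mod_cast (by linarith : (0 : ℝ) ≤ 1 - ε)
  have hX : (0 : ℝ) < ε / Fintype.card X := by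
    have : (0 : ℝ) < Fintype.card X := by exact_mod_cast Fintype.card_pos
    positivity
  have hA : (0 : ℝ) < ε / Fintype.card A := by
    have : (0 : ℝ) < Fintype.card A := by exact_mod_cast Fintype.card_pos
    positivity
  have hX' : (0 : ℂ) < ((ε / Fintype.card X : ℝ) : ℂ) := by exact_mod_cast hX
  have hA' : (0 : ℂ) < ((ε / Fintype.card A : ℝ) : ℂ) := by exact_mod_cast hA
  have pd : ∀ (P : Matrix (X × A) (X × A) ℂ) (c : ℂ), P.PosSemidef → 0 < c →
      (((1 - ε : ℝ) : ℂ) • P + c • 1).PosDef := fun P c hP hc =>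
    (PosDef.one.smul hc).posSemidef_add (hP.smul c1)
  have hstar : star ((1 - ε : ℝ) : ℂ) = ((1 - ε : ℝ) : ℂ) := by
    rw [Complex.star_def, Complex.conj_ofReal]
  have blk : ∀ (P : Matrix (X × A) (X × A) ℂ) (Q : Matrix (Y × B) (Y × B) ℂ) (c : ℂ), 0 < c →
      (fromBlocks P C Cᴴ Q).PosSemidef →
      (fromBlocks (((1 - ε : ℝ) : ℂ) • P + c • 1) (((1 - ε : ℝ) : ℂ) • C) (((1 - ε : ℝ) : ℂ) • C)ᴴ
        (((1 - ε : ℝ) : ℂ) • Q)).PosSemidef := by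
    intro P Q c hc h
    have k1 := h.smul c1
    have k2 : (fromBlocks (c • 1) 0 0 0 : Matrix ((X × A) ⊕ (Y × B)) ((X × A) ⊕ (Y × B)) ℂ).PosSemidef := by
      have : (fromBlocks (c • 1) 0 0 0 : Matrix ((X × A) ⊕ (Y × B)) ((X × A) ⊕ (Y × B)) ℂ)
        = diagonal (Sum.elim (fun _ => c) (fun _ => 0)) := by
        rw [← fromBlocks_diagonal]
        congr 1
        · rw [smul_one_eq_diagonal]
        · rw [diagonal_zero]
      rw [this, posSemidef_diagonal_iff]
      rintro (i | i)
      · exact hc.le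
      · exact le_rfl
    have := k1.add k2
    rw [fromBlocks_smul, fromBlocks_add] at this
    rw [conjTranspose_smul, hstar]
    simpa using this
  have shr : ∀ {α : Type} [Fintype α] [DecidableEq α] {M : Matrix α α ℂ}, M ≤ 1 →
      ((1 - ε : ℝ) : ℂ) • M + ((ε : ℝ) : ℂ) • 1 ≤ 1 := by
    intro α _ _ M h
    rw [Matrix.le_iff] at h ⊢
    have := h.smul c1
    convert this using 1
    push_cast
    module
  have shr2 : ∀ {α : Type} [Fintype α] [DecidableEq α] {M : Matrix α α ℂ}, M ≤ 1 →
      ((1 - ε : ℝ) : ℂ) • M ≤ 1 := by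
    intro α _ _ M h
    refine le_trans ?_ (shr h)
    rw [Matrix.le_iff, add_sub_cancel_left]
    exact PosSemidef.one.smul (by exact_mod_cast h0.le)
  have := boot_step G J N hJ hN (((1 - ε : ℝ) : ℂ) • C)
    (((1 - ε : ℝ) : ℂ) • Po + ((ε / Fintype.card X : ℝ) : ℂ) • 1)
    (((1 - ε : ℝ) : ℂ) • Pi + ((ε / Fintype.card A : ℝ) : ℂ) • 1)
    (((1 - ε : ℝ) : ℂ) • Qo) (((1 - ε : ℝ) : ℂ) • Qi) (pd _ _ hPo hX') (pd _ _ hPi hA')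
    (blk _ _ _ hX' hb1) (blk _ _ _ hA' hb2) (by
      refine le_of_eq_of_le ?_ (shr h3)
      ext a a'
      have : (Fintype.card X : ℂ) ≠ 0 := by exact_mod_cast Fintype.card_ne_zero
      by_cases haa : a = a'
      · subst haa
        simp [outTr, Finset.sum_add_distrib, ← Finset.mul_sum]
      · simp [outTr, Finset.sum_add_distrib, ← Finset.mul_sum, haa, Matrix.one_apply])
    (by
      refine le_of_eq_of_le ?_ (shr h4)
      ext a a'
      have : (Fintype.card A : ℂ) ≠ 0 := by exact_mod_cast Fintype.card_ne_zero
      by_cases haa : a = a'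
      · subst haa
        simp [inTr, Finset.sum_add_distrib, ← Finset.mul_sum]
      · simp [inTr, Finset.sum_add_distrib, ← Finset.mul_sum, haa, Matrix.one_apply])
    (by
      refine le_of_eq_of_le ?_ (shr2 h5)
      ext a a'
      simp [outTr, ← Finset.mul_sum])
    (by
      refine le_of_eq_of_le ?_ (shr2 h6)
      ext a a'
      simp [inTr, ← Finset.mul_sum])
  rw [pair_smul, norm_mul, Complex.norm_real, Real.norm_eq_abs, abs_of_pos (by linarith)] at this
  exact this

theorem bootstrap [Nonempty X] [Nonempty A] (G : Matrix (X × A) (Y × B) ℂ) (J : ℝ)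
    (hJ : ∀ (Q : Type) [Fintype Q] [DecidableEq Q] (ω : Q → ℝ), ∑ f, ω f ^ 2 = 1 →
      ∀ (S : Matrix (A × Q) (X × Q) ℂ) (S' : Matrix (B × Q) (Y × Q) ℂ), Sᴴ * S ≤ 1 → S'ᴴ * S' ≤ 1 →
        ‖ampPhi G ω S S'‖ ≤ J)
    (C : Matrix (X × A) (Y × B) ℂ) (hC : Feas C) : ‖pair G C‖ ≤ 2 * J := by
  let T : Set ℝ := {r | ∃ D : Matrix (X × A) (Y × B) ℂ, Feas D ∧ r = ‖pair G D‖}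
  have hb : BddAbove T := ⟨∑ i, ∑ j, ‖G i j‖, by
    rintro r ⟨D, hD, rfl⟩
    exact hD.pair_le G⟩
  have hN : ∀ D : Matrix (X × A) (Y × B) ℂ, Feas D → ‖pair G D‖ ≤ sSup T := fun D hD =>
    le_csSup hb ⟨D, hD, rfl⟩
  have key : sSup T ≤ J + sSup T / 2 := by
    refine csSup_le ⟨_, C, hC, rfl⟩ ?_
    rintro r ⟨D, hD, rfl⟩
    have hlim : Filter.Tendsto (fun ε : ℝ => (1 - ε) * ‖pair G D‖) (nhdsWithin 0 (Set.Ioi 0))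
        (nhds ((1 - 0) * ‖pair G D‖)) := by
      apply Filter.Tendsto.mono_left _ nhdsWithin_le_nhds
      exact (Continuous.tendsto (by fun_prop) 0)
    rw [sub_zero, one_mul] at hlim
    refine le_of_tendsto hlim ?_
    filter_upwards [Ioo_mem_nhdsGT (zero_lt_one : (0 : ℝ) < 1)] with ε hε
    exact boot_pert G J (sSup T) hJ hN D hD ε hε.1 hε.2
  have := hN C hC
  linarith

end boot


section qlower
open scoped MatrixOrder

/-- compression isometry -/
noncomputable def cmpV {I J Q Q' : Type*} [DecidableEq I] [DecidableEq J] (ψ : Q × Q' → ℂ) :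
    Matrix ((I × Q) × (J × Q')) (I × J) ℂ :=
  Matrix.of fun u v => if u.1.1 = v.1 ∧ u.2.1 = v.2 then ψ (u.1.2, u.2.2) else 0

/-- correlation kernel -/
noncomputable def corrKer {I J Q Q' : Type*} [Fintype I] [Fintype J] [Fintype Q] [Fintype Q']
    [DecidableEq I] [DecidableEq J] (E : Matrix (I × Q) (I × Q) ℂ)
    (F : Matrix (J × Q') (J × Q') ℂ) (ψ : Q × Q' → ℂ) : Matrix (I × J) (I × J) ℂ :=
  Matrix.conjTranspose (cmpV (I := I) (J := J) ψ) * (E ⊗ₖ F) * cmpV (I := I) (J := J) ψ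

section
variable {I J Q Q' : Type*} [Fintype I] [Fintype J] [Fintype Q] [Fintype Q']
    [DecidableEq I] [DecidableEq J]

theorem cmpV_sum (ψ : Q × Q' → ℂ) (v : I × J) (g : (I × Q) × (J × Q') → ℂ) :
    ∑ u, g u * (cmpV ψ : Matrix ((I × Q) × (J × Q')) (I × J) ℂ) u v
      = ∑ f, ∑ h, g ((v.1, f), (v.2, h)) * ψ (f, h) := by
  simp only [Fintype.sum_prod_type, cmpV, of_apply, ite_and, mul_ite, mul_zero]
  rw [Finset.sum_eq_single v.1]
  · refine Finset.sum_congr rfl fun f _ => ?_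
    rw [Finset.sum_eq_single v.2]
    · simp
    · intro j _ hj; simp [hj]
    · simp
  · intro i _ hi; simp [hi]
  · simp

theorem corrKer_apply (E : Matrix (I × Q) (I × Q) ℂ)
    (F : Matrix (J × Q') (J × Q') ℂ) (ψ : Q × Q' → ℂ) (v v' : I × J) :
    corrKer E F ψ v v' = ∑ f', ∑ h', (∑ f, ∑ h, star (ψ (f, h)) * (E (v.1, f) (v'.1, f') * F (v.2, h) (v'.2, h')))
      * ψ (f', h') := by
  rw [corrKer, Matrix.mul_apply, cmpV_sum]
  refine Finset.sum_congr rfl fun f' _ => Finset.sum_congr rfl fun h' _ => ?_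
  congr 1
  rw [Matrix.mul_apply]
  have := congrArg star (cmpV_sum (I := I) (J := J) ψ v (fun u => star ((E ⊗ₖ F) u ((v'.1, f'), v'.2, h'))))
  simp only [star_sum, star_mul', star_star] at this
  simp only [conjTranspose_apply]
  rw [← Finset.sum_congr rfl fun u _ => mul_comm _ _, this]
  simp only [kroneckerMap_apply]
  refine Finset.sum_congr rfl fun f _ => Finset.sum_congr rfl fun h _ => ?_
  ring

theorem corrKer_psd {E : Matrix (I × Q) (I × Q) ℂ} {F : Matrix (J × Q') (J × Q') ℂ} (ψ : Q × Q' → ℂ)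
    (hE : E.PosSemidef) (hF : F.PosSemidef) : (corrKer E F ψ).PosSemidef := by
  unfold corrKer
  exact (hE.kronecker hF).conjTranspose_mul_mul_same _

theorem corrKer_add_left (E E' : Matrix (I × Q) (I × Q) ℂ) (F : Matrix (J × Q') (J × Q') ℂ) (ψ : Q × Q' → ℂ) :
    corrKer (E + E') F ψ = corrKer E F ψ + corrKer E' F ψ := by
  simp only [corrKer, add_kronecker, Matrix.mul_add, Matrix.add_mul]

theorem corrKer_add_right (E : Matrix (I × Q) (I × Q) ℂ) (F F' : Matrix (J × Q') (J × Q') ℂ) (ψ : Q × Q' → ℂ) :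
    corrKer E (F + F') ψ = corrKer E F ψ + corrKer E F' ψ := by
  simp only [corrKer, kronecker_add, Matrix.mul_add, Matrix.add_mul]

/-- quadratic form -/
noncomputable def qf (G : Matrix I J ℂ) (M : Matrix (I × J) (I × J) ℂ) : ℂ :=
  star (fun v : I × J => G v.1 v.2) ⬝ᵥ (M *ᵥ (fun v : I × J => G v.1 v.2))

theorem qf_add (G : Matrix I J ℂ) (M M' : Matrix (I × J) (I × J) ℂ) : qf G (M + M') = qf G M + qf G M' := by
  simp [qf, add_mulVec, dotProduct_add]

theorem qf_nonneg (G : Matrix I J ℂ) {M : Matrix (I × J) (I × J) ℂ} (h : M.PosSemidef) : 0 ≤ qf G M :=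
  h.dotProduct_mulVec_nonneg _

theorem psd_entry {α : Type*} {M : Matrix α α ℂ} (h : M.PosSemidef) (h1 : ∀ i, M i i ≤ 1) (i j : α) :
    ‖M i j‖ ≤ 1 := by
  have hd := (h.submatrix ![i, j]).det_nonneg
  rw [det_fin_two] at hd
  have hs : M j i = star (M i j) := (h.isHermitian.apply j i).symm
  simp only [submatrix_apply, cons_val_zero, cons_val_one, hs, Complex.star_def,
    Complex.mul_conj', sub_nonneg] at hd
  have h7 : ((‖M i j‖ ^ 2 : ℝ) : ℂ) ≤ ((1 : ℝ) : ℂ) := by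
    push_cast
    calc _ ≤ _ := hd
      _ ≤ 1 * 1 := mul_le_mul (h1 i) (h1 j) h.diag_nonneg zero_le_one
      _ = 1 := one_mul 1
  have h8 : ‖M i j‖ ^ 2 ≤ 1 := by exact_mod_cast h7
  nlinarith [norm_nonneg (M i j)]

theorem qf_norm_le (G : Matrix I J ℂ) {M : Matrix (I × J) (I × J) ℂ} (h : ∀ i j, ‖M i j‖ ≤ 1) :
    ‖qf G M‖ ≤ ∑ v : I × J, ∑ v' : I × J, ‖G v.1 v.2‖ * ‖G v'.1 v'.2‖ := by
  rw [qf, dotProduct]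
  refine (norm_sum_le _ _).trans (Finset.sum_le_sum fun v _ => ?_)
  rw [norm_mul, mulVec, dotProduct, ← Finset.mul_sum, Pi.star_apply, norm_star]
  refine mul_le_mul_of_nonneg_left ?_ (norm_nonneg _)
  refine (norm_sum_le _ _).trans (Finset.sum_le_sum fun v' _ => ?_)
  rw [norm_mul]
  exact mul_le_of_le_one_left (norm_nonneg _) (h _ _)

end

/-- kernel of a map -/
noncomputable def kerOf {X Y A B : Type} [Fintype X] [Fintype Y] [Fintype A] [Fintype B]
    [DecidableEq X] [DecidableEq Y]
    (Γ : Matrix (X × Y) (X × Y) ℂ →ₗ[ℂ] Matrix (A × B) (A × B) ℂ) :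
    Matrix ((X × A) × (Y × B)) ((X × A) × (Y × B)) ℂ :=
  Matrix.of fun u v => Γ (Matrix.single (u.1.1, u.2.1) (v.1.1, v.2.1) 1) (u.1.2, u.2.2) (v.1.2, v.2.2)

/-- game matrix -/
noncomputable def gm {X Y A B HR : Type*} [NormedAddCommGroup HR] [InnerProductSpace ℂ HR]
    (ξ : X × Y → HR) (γ : A × B → HR) : Matrix (X × A) (Y × B) ℂ :=
  Matrix.of fun i j => ⟪ξ (i.1, j.1), γ (i.2, j.2)⟫

variable {X Y A B : Type} [Fintype X] [Fintype Y] [Fintype A] [Fintype B]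
    [DecidableEq X] [DecidableEq Y] [DecidableEq A] [DecidableEq B]

theorem sum_shuffle (f : (X × A) × (Y × B) → ℂ) :
    ∑ u, f u = ∑ p : A × B, ∑ w : X × Y, f ((w.1, p.1), (w.2, p.2)) := by
  rw [← Fintype.sum_prod_type']
  refine Fintype.sum_equiv ⟨fun u => ((u.1.2, u.2.2), (u.1.1, u.2.1)), fun v => ((v.2.1, v.1.1), (v.2.2, v.1.2)),
    fun u => rfl, fun v => rfl⟩ _ _ fun u => rfl

theorem gameValue_eq {HR : Type*} [NormedAddCommGroup HR] [InnerProductSpace ℂ HR]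
    (Γ : Matrix (X × Y) (X × Y) ℂ →ₗ[ℂ] Matrix (A × B) (A × B) ℂ)
    (ξ : X × Y → HR) (n : ℕ) (γ : Fin n → (A × B → HR)) :
    gameValue Γ ξ n γ = ∑ k, qf (gm ξ (γ k)) (kerOf Γ) := by
  refine Finset.sum_congr rfl fun k _ => ?_
  rw [qf, dotProduct, sum_shuffle]
  refine Finset.sum_congr rfl fun p _ => ?_
  rw [Finset.sum_comm]
  refine Finset.sum_congr rfl fun w _ => ?_
  rw [mulVec, dotProduct, sum_shuffle, Finset.mul_sum]
  refine Finset.sum_congr rfl fun q _ => ?_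
  rw [Finset.mul_sum]
  refine Finset.sum_congr rfl fun w' _ => ?_
  simp only [kerOf, gm, of_apply, Pi.star_apply, Complex.star_def, inner_conj_symm]
  ring

theorem single_kron (x x' : X) (y y' : Y) :
    (Matrix.single x x' (1 : ℂ)) ⊗ₖ (Matrix.single y y' (1 : ℂ)) = Matrix.single (x, y) (x', y') 1 := by
  rw [Matrix.single_kronecker_single]; simp

theorem dot_kron {dA dB : Type*} [Fintype dA] [Fintype dB] (e : Matrix dA dA ℂ) (f : Matrix dB dB ℂ)
    (ψ : dA × dB → ℂ) : star ψ ⬝ᵥ ((e ⊗ₖ f) *ᵥ ψ) =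
     ∑ f', ∑ h', (∑ g, ∑ h, star (ψ (g, h)) * (e g f' * f h h')) * ψ (f', h') := by
  rw [dotProduct_mulVec, dotProduct, Fintype.sum_prod_type]
  refine Finset.sum_congr rfl fun a _ => Finset.sum_congr rfl fun b _ => ?_
  rw [vecMul, dotProduct, Fintype.sum_prod_type]
  rfl

theorem isQ_kernel {Γ : Matrix (X × Y) (X × Y) ℂ →ₗ[ℂ] Matrix (A × B) (A × B) ℂ}
    (h : IsQCorrelation Γ) : (kerOf Γ).PosSemidef ∧ ∀ u, kerOf Γ u u ≤ 1 := by
  obtain ⟨dA, dB, E, F, ψ, hE, hF, hψ, hΓ⟩ := h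
  have hk : kerOf Γ = corrKer (Matrix.of fun (p q : (X × A) × Fin dA) => E p.1.1 q.1.1 p.1.2 q.1.2 p.2 q.2)
      (Matrix.of fun (p q : (Y × B) × Fin dB) => F p.1.1 q.1.1 p.1.2 q.1.2 p.2 q.2) ψ := by
    ext u v
    rw [corrKer_apply]
    simp only [kerOf, of_apply]
    rw [← single_kron, hΓ, of_apply, dot_kron]
  have hpsd : (kerOf Γ).PosSemidef := by
    rw [hk]; exact corrKer_psd _ hE.1 hF.1
  refine ⟨hpsd, fun u => ?_⟩
  have hsum : ∑ p : A × B, kerOf Γ ((u.1.1, p.1), (u.2.1, p.2)) ((u.1.1, p.1), (u.2.1, p.2)) = 1 := by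
    have e1 : ∀ p : A × B, kerOf Γ ((u.1.1, p.1), (u.2.1, p.2)) ((u.1.1, p.1), (u.2.1, p.2)) =
        star ψ ⬝ᵥ ((E u.1.1 u.1.1 p.1 p.1 ⊗ₖ F u.2.1 u.2.1 p.2 p.2) *ᵥ ψ) := by
      intro p
      simp only [kerOf, of_apply]
      rw [← single_kron, hΓ, of_apply]
    simp only [e1]
    rw [← dotProduct_sum, ← sum_mulVec]
    have e2 : ∑ p : A × B, (E u.1.1 u.1.1 p.1 p.1 ⊗ₖ F u.2.1 u.2.1 p.2 p.2) = 1 := by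
      rw [Fintype.sum_prod_type]
      have : (∑ a, E u.1.1 u.1.1 a a) ⊗ₖ (∑ b, F u.2.1 u.2.1 b b) =
          ∑ a, ∑ b, E u.1.1 u.1.1 a a ⊗ₖ F u.2.1 u.2.1 b b := by
        ext i j
        simp only [kroneckerMap_apply, Matrix.sum_apply, Finset.sum_mul_sum]
      rw [← this, hE.2, hF.2, if_pos rfl, if_pos rfl, one_kronecker_one]
    rw [e2, one_mulVec, dotProduct]
    simp only [Pi.star_apply, Complex.star_def, Complex.conj_mul']
    exact_mod_cast hψ
  rw [← hsum]
  exact Finset.single_le_sum (f := fun p : A × B => kerOf Γ ((u.1.1, p.1), (u.2.1, p.2)) ((u.1.1, p.1), (u.2.1, p.2)))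
    (fun p _ => hpsd.diag_nonneg) (Finset.mem_univ (u.1.2, u.2.2))

/-- the map with given kernel -/
noncomputable def mapOf (K : Matrix ((X × A) × (Y × B)) ((X × A) × (Y × B)) ℂ) :
    Matrix (X × Y) (X × Y) ℂ →ₗ[ℂ] Matrix (A × B) (A × B) ℂ where
  toFun T := Matrix.of fun p q => ∑ w, ∑ w', T w w' * K ((w.1, p.1), (w.2, p.2)) ((w'.1, q.1), (w'.2, q.2))
  map_add' T T' := by
    ext p q
    simp [add_mul, Finset.sum_add_distrib]
  map_smul' c T := by
    ext p q
    simp [Finset.mul_sum, mul_assoc]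

theorem mapOf_single (K : Matrix ((X × A) × (Y × B)) ((X × A) × (Y × B)) ℂ) (w w' : X × Y) (p q : A × B) :
    mapOf K (Matrix.single w w' 1) p q = K ((w.1, p.1), (w.2, p.2)) ((w'.1, q.1), (w'.2, q.2)) := by
  change ∑ v, ∑ v', (Matrix.single w w' (1:ℂ)) v v' * K ((v.1, p.1), (v.2, p.2)) ((v'.1, q.1), (v'.2, q.2)) = _
  rw [Finset.sum_eq_single w, Finset.sum_eq_single w']
  · simp
  · intro v _ hv
    rw [Matrix.single_apply_of_ne]
    · simp
    · simp [hv.symm]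
  · simp
  · intro v _ hv
    refine Finset.sum_eq_zero fun v' _ => ?_
    rw [Matrix.single_apply_of_ne]
    · simp
    · simp [hv.symm]
  · simp

theorem kerOf_mapOf (K : Matrix ((X × A) × (Y × B)) ((X × A) × (Y × B)) ℂ) : kerOf (mapOf K) = K := by
  ext u v
  simp only [kerOf, of_apply, mapOf_single]

theorem isQ_of {Q Q' : Type} [Fintype Q] [Fintype Q'] [DecidableEq Q] [DecidableEq Q']
    (E : Matrix ((X × A) × Q) ((X × A) × Q) ℂ) (F : Matrix ((Y × B) × Q') ((Y × B) × Q') ℂ)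
    (ψ : Q × Q' → ℂ) (hE : E.PosSemidef) (hF : F.PosSemidef)
    (hE1 : ∀ x x' f g, ∑ a, E ((x, a), f) ((x', a), g) = if (x, f) = (x', g) then 1 else 0)
    (hF1 : ∀ x x' f g, ∑ a, F ((x, a), f) ((x', a), g) = if (x, f) = (x', g) then 1 else 0)
    (hψ : ∑ q, ‖ψ q‖ ^ 2 = 1) : IsQCorrelation (mapOf (corrKer E F ψ)) := by
  let e := (Fintype.equivFin Q).symm
  let e' := (Fintype.equivFin Q').symm
  refine ⟨Fintype.card Q, Fintype.card Q',
    fun x x' a a' => Matrix.of fun f g => E ((x, a), e f) ((x', a'), e g),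
    fun x x' a a' => Matrix.of fun f g => F ((x, a), e' f) ((x', a'), e' g),
    fun q => ψ (e q.1, e' q.2), ⟨?_, ?_⟩, ⟨?_, ?_⟩, ?_, ?_⟩
  · exact hE.submatrix (fun p : (X × A) × Fin (Fintype.card Q) => (p.1, e p.2))
  · intro x x'
    ext f g
    simp only [Matrix.sum_apply, of_apply, hE1]
    by_cases hx : x = x'
    · simp [hx, Matrix.one_apply]
    · simp [hx]
  · exact hF.submatrix (fun p : (Y × B) × Fin (Fintype.card Q') => (p.1, e' p.2))
  · intro x x'
    ext f g
    simp only [Matrix.sum_apply, of_apply, hF1]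
    by_cases hx : x = x'
    · simp [hx, Matrix.one_apply]
    · simp [hx]
  · rw [← hψ]
    exact Fintype.sum_equiv (e.prodCongr e') _ _ fun q => rfl
  · intro x x' y y'
    ext p q
    rw [single_kron, mapOf_single, corrKer_apply, of_apply, dot_kron]
    refine (Fintype.sum_equiv e _ _ fun f' => Fintype.sum_equiv e' _ _ fun h' => ?_).symm
    congr 1
    refine Fintype.sum_equiv e _ _ fun f' => Fintype.sum_equiv e' _ _ fun h' => ?_
    rfl

end qlower


section qlower2
open scoped MatrixOrder

/-- reshaping -/
noncomputable def reshp {X A Q : Type*} (S : Matrix (A × Q) (X × Q) ℂ) : Matrix Q ((X × A) × Q) ℂ :=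
  Matrix.of fun h u => S (u.1.2, h) (u.1.1, u.2)

theorem exists_compl {X A Q : Type*} [Fintype X] [Fintype A] [Fintype Q] [DecidableEq X] [DecidableEq A]
    [DecidableEq Q] [Nonempty A] (S : Matrix (A × Q) (X × Q) ℂ) (hS : Sᴴ * S ≤ 1) :
    ∃ E2 : Matrix ((X × A) × Q) ((X × A) × Q) ℂ, E2.PosSemidef ∧
      ∀ x x' f g, ∑ a, (Matrix.conjTranspose (reshp S) * reshp S + E2) ((x, a), f) ((x', a), g) =
        if (x, f) = (x', g) then 1 else 0 := by
  obtain ⟨a0⟩ := ‹Nonempty A›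
  have h1 : (1 - Sᴴ * S).PosSemidef := Matrix.le_iff.mp hS
  have h2 : (Matrix.diagonal (fun a : A => if a = a0 then (1 : ℂ) else 0)).PosSemidef := by
    rw [posSemidef_diagonal_iff]
    intro a
    split_ifs <;> simp
  refine ⟨((1 - Sᴴ * S) ⊗ₖ Matrix.diagonal (fun a : A => if a = a0 then (1 : ℂ) else 0)).submatrix
    (fun u => ((u.1.1, u.2), u.1.2)) (fun u => ((u.1.1, u.2), u.1.2)), (h1.kronecker h2).submatrix _, ?_⟩
  intro x x' f g
  simp only [Matrix.add_apply, Finset.sum_add_distrib, submatrix_apply, kroneckerMap_apply,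
    diagonal_apply_eq, mul_ite, mul_one, mul_zero, Finset.sum_ite_eq', Finset.mem_univ, if_true]
  have h3 : ∑ a, (Matrix.conjTranspose (reshp S) * reshp S) ((x, a), f) ((x', a), g) = (Sᴴ * S) (x, f) (x', g) := by
    simp only [Matrix.mul_apply, conjTranspose_apply, reshp, of_apply, Fintype.sum_prod_type]
  rw [h3, Matrix.sub_apply, Matrix.one_apply]
  ring

theorem qf_ge {X Y A B Q : Type*} [Fintype X] [Fintype Y] [Fintype A] [Fintype B] [Fintype Q]
    [DecidableEq X] [DecidableEq Y] [DecidableEq A] [DecidableEq B] [DecidableEq Q]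
    (G : Matrix (X × A) (Y × B) ℂ)
    (ω : Q → ℝ) (hω : ∑ f, ω f ^ 2 = 1) (S : Matrix (A × Q) (X × Q) ℂ) (S' : Matrix (B × Q) (Y × Q) ℂ) :
    ((‖pair G (ampC ω S S')‖ ^ 2 : ℝ) : ℂ) ≤
      qf G (corrKer (Matrix.conjTranspose (reshp S) * reshp S) (Matrix.conjTranspose (reshp S') * reshp S')
        (fun q : Q × Q => if q.1 = q.2 then (ω q.1 : ℂ) else 0)) := by
  set ψ : Q × Q → ℂ := fun q : Q × Q => if q.1 = q.2 then (ω q.1 : ℂ) else 0 with hψ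
  let V : Matrix (((X × A) × Q) × ((Y × B) × Q)) ((X × A) × (Y × B)) ℂ := cmpV ψ
  let Z : Matrix (Q × Q) ((X × A) × (Y × B)) ℂ := (reshp S ⊗ₖ reshp S') * V
  let g : (X × A) × (Y × B) → ℂ := fun v => G v.1 v.2
  have hZ : corrKer (Matrix.conjTranspose (reshp S) * reshp S) (Matrix.conjTranspose (reshp S') * reshp S') ψ =
      Matrix.conjTranspose Z * Z := by
    unfold corrKer
    rw [mul_kronecker_mul, ← conjTranspose_kronecker]
    simp only [Z, V, conjTranspose_mul, Matrix.mul_assoc]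
  have hq : qf G (Matrix.conjTranspose Z * Z) = ((∑ q, ‖(Z *ᵥ g) q‖ ^ 2 : ℝ) : ℂ) := by
    rw [qf, ← mulVec_mulVec, dotProduct_mulVec, vecMul_conjTranspose, star_star, dotProduct]
    push_cast
    refine Finset.sum_congr rfl fun q _ => ?_
    rw [Pi.star_apply, Complex.star_def, Complex.conj_mul']
  rw [hZ, hq]
  have hp : pair G (ampC ω S S') = ∑ q, ψ q * (Z *ᵥ g) q := by
    have hz : ∀ q v, Z q v = ∑ f, S (v.1.2, q.1) (v.1.1, f) * S' (v.2.2, q.2) (v.2.1, f) * ω f := by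
      intro q v
      simp only [Z, V, Matrix.mul_apply]
      rw [cmpV_sum]
      simp [hψ, reshp]
    have h1 : ∑ q, ψ q * (Z *ᵥ g) q = ∑ h, (ω h : ℂ) * (Z *ᵥ g) (h, h) := by
      rw [Fintype.sum_prod_type]
      refine Finset.sum_congr rfl fun h _ => ?_
      rw [Finset.sum_eq_single h]
      · simp [hψ]
      · intro b _ hb
        simp [hψ, hb.symm]
      · simp
    rw [h1]
    simp only [mulVec, dotProduct, hz, Finset.mul_sum, Finset.sum_mul]
    rw [Finset.sum_comm]
    unfold pair
    rw [← Fintype.sum_prod_type' (f := fun i j => G i j * ampC ω S S' i j)]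
    refine Finset.sum_congr rfl fun v _ => ?_
    simp only [ampC, of_apply, Finset.mul_sum]
    refine Finset.sum_congr rfl fun f _ => Finset.sum_congr rfl fun h _ => ?_
    simp only [g]
    ring
  have hψ1 : ∑ q, ‖ψ q‖ ^ 2 = 1 := by
    rw [← hω, Fintype.sum_prod_type]
    refine Finset.sum_congr rfl fun h _ => ?_
    rw [Finset.sum_eq_single h]
    · simp [hψ]
    · intro b _ hb
      simp [hψ, hb.symm]
    · simp
  have hcs : ‖pair G (ampC ω S S')‖ ^ 2 ≤ ∑ q, ‖(Z *ᵥ g) q‖ ^ 2 := by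
    have h1 : ‖pair G (ampC ω S S')‖ ≤ ∑ q, ‖ψ q‖ * ‖(Z *ᵥ g) q‖ := by
      rw [hp]
      refine (norm_sum_le _ _).trans (le_of_eq ?_)
      simp
    calc _ ≤ (∑ q, ‖ψ q‖ * ‖(Z *ᵥ g) q‖) ^ 2 := by gcongr
      _ ≤ (∑ q, ‖ψ q‖ ^ 2) * ∑ q, ‖(Z *ᵥ g) q‖ ^ 2 := Finset.sum_mul_sq_le_sq_mul_sq _ _ _
      _ = _ := by rw [hψ1, one_mul]
  exact_mod_cast hcs

variable {X Y A B : Type} [Fintype X] [Fintype Y] [Fintype A] [Fintype B]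
    [DecidableEq X] [DecidableEq Y] [DecidableEq A] [DecidableEq B]

theorem exists_isQ [Nonempty A] [Nonempty B] {Q : Type} [Fintype Q] [DecidableEq Q] (G : Matrix (X × A) (Y × B) ℂ)
    (ω : Q → ℝ) (hω : ∑ f, ω f ^ 2 = 1) (S : Matrix (A × Q) (X × Q) ℂ) (S' : Matrix (B × Q) (Y × Q) ℂ)
    (hS : Sᴴ * S ≤ 1) (hS' : S'ᴴ * S' ≤ 1) :
    ∃ Γ : Matrix (X × Y) (X × Y) ℂ →ₗ[ℂ] Matrix (A × B) (A × B) ℂ, IsQCorrelation Γ ∧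
      ((‖pair G (ampC ω S S')‖ ^ 2 : ℝ) : ℂ) ≤ qf G (kerOf Γ) := by
  obtain ⟨E2, hE2, hE⟩ := exists_compl S hS
  obtain ⟨F2, hF2, hF⟩ := exists_compl S' hS'
  have pE := posSemidef_conjTranspose_mul_self (reshp S)
  have pF := posSemidef_conjTranspose_mul_self (reshp S')
  refine ⟨_, isQ_of _ _ (fun q : Q × Q => if q.1 = q.2 then (ω q.1 : ℂ) else 0) (pE.add hE2) (pF.add hF2) hE hF ?_, ?_⟩
  · rw [← hω, Fintype.sum_prod_type]
    refine Finset.sum_congr rfl fun h _ => ?_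
    rw [Finset.sum_eq_single h]
    · simp
    · intro b _ hb
      simp [hb.symm]
    · simp
  · rw [kerOf_mapOf, corrKer_add_left, corrKer_add_right, qf_add, qf_add, add_assoc]
    refine (qf_ge G ω hω S S').trans (le_add_of_nonneg_right (add_nonneg ?_ ?_))
    · exact qf_nonneg _ (corrKer_psd _ pE hF2)
    · exact qf_nonneg _ (corrKer_psd _ hE2 (pF.add hF2))

theorem qval_bdd {HR : Type*} [NormedAddCommGroup HR] [InnerProductSpace ℂ HR]
    (ξ : X × Y → HR) (n : ℕ) (γ : Fin n → (A × B → HR)) :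
    BddAbove {t : ℝ | ∃ Γ, IsQCorrelation Γ ∧ (t : ℂ) = gameValue Γ ξ n γ} := by
  refine ⟨∑ k, ∑ v : (X × A) × (Y × B), ∑ v' : (X × A) × (Y × B),
    ‖gm ξ (γ k) v.1 v.2‖ * ‖gm ξ (γ k) v'.1 v'.2‖, ?_⟩
  rintro t ⟨Γ, hΓ, ht⟩
  obtain ⟨h1, h2⟩ := isQ_kernel hΓ
  have h3 : ‖(t : ℂ)‖ ≤ ∑ k, ∑ v : (X × A) × (Y × B), ∑ v' : (X × A) × (Y × B),
    ‖gm ξ (γ k) v.1 v.2‖ * ‖gm ξ (γ k) v'.1 v'.2‖ := by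
    rw [ht, gameValue_eq]
    exact (norm_sum_le _ _).trans (Finset.sum_le_sum fun k _ => qf_norm_le _ (psd_entry h1 h2))
  rw [Complex.norm_real] at h3
  exact (le_abs_self t).trans h3

theorem qval_ge {HR : Type*} [NormedAddCommGroup HR] [InnerProductSpace ℂ HR]
    (ξ : X × Y → HR) (n : ℕ) (γ : Fin n → (A × B → HR)) (k : Fin n)
    {Γ : Matrix (X × Y) (X × Y) ℂ →ₗ[ℂ] Matrix (A × B) (A × B) ℂ} (hΓ : IsQCorrelation Γ) {c : ℝ}
    (hc : (c : ℂ) ≤ qf (gm ξ (γ k)) (kerOf Γ)) :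
    c ≤ sSup {t : ℝ | ∃ Γ, IsQCorrelation Γ ∧ (t : ℂ) = gameValue Γ ξ n γ} := by
  have h1 := (isQ_kernel hΓ).1
  have h2 : (c : ℂ) ≤ gameValue Γ ξ n γ := by
    rw [gameValue_eq]
    exact hc.trans (Finset.single_le_sum (f := fun k => qf (gm ξ (γ k)) (kerOf Γ))
      (fun k _ => qf_nonneg _ h1) (Finset.mem_univ k))
  have h3 : ((gameValue Γ ξ n γ).re : ℂ) = gameValue Γ ξ n γ := by
    have := (Complex.le_def.mp h2).2
    exact Complex.ext rfl (by simpa using this)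
  refine le_csSup_of_le (qval_bdd ξ n γ) ⟨Γ, hΓ, h3⟩ ?_
  simpa using (Complex.le_def.mp h2).1

theorem qval_nonneg {HR : Type*} [NormedAddCommGroup HR] [InnerProductSpace ℂ HR]
    (ξ : X × Y → HR) (n : ℕ) (γ : Fin n → (A × B → HR)) :
    0 ≤ sSup {t : ℝ | ∃ Γ, IsQCorrelation Γ ∧ (t : ℂ) = gameValue Γ ξ n γ} := by
  refine Real.sSup_nonneg ?_
  rintro t ⟨Γ, hΓ, ht⟩
  have : (0 : ℂ) ≤ (t : ℂ) := by
    rw [ht, gameValue_eq]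
    exact Finset.sum_nonneg fun k _ => qf_nonneg _ (isQ_kernel hΓ).1
  exact_mod_cast this

/-- Main bound for feasible pairings. -/
theorem feas_bound [Nonempty X] [Nonempty A] [Nonempty B] {HR : Type*} [NormedAddCommGroup HR] [InnerProductSpace ℂ HR]
    (ξ : X × Y → HR) (n : ℕ) (γ : Fin n → (A × B → HR)) (k : Fin n)
    (C : Matrix (X × A) (Y × B) ℂ) (hC : Feas C) :
    ‖pair (gm ξ (γ k)) C‖ ≤
      2 * √(sSup {t : ℝ | ∃ Γ, IsQCorrelation Γ ∧ (t : ℂ) = gameValue Γ ξ n γ}) := by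
  refine bootstrap _ _ ?_ C hC
  intro Q _ _ ω hω S S' hS hS'
  refine Real.le_sqrt_of_sq_le ?_
  obtain ⟨Γ, hΓ, h⟩ := exists_isQ (gm ξ (γ k)) ω hω S S' hS hS'
  exact qval_ge ξ n γ k hΓ h

end qlower2


section opsqrt


variable {I : Type*} [Fintype I] [DecidableEq I] {H : Type*} [NormedAddCommGroup H] [InnerProductSpace ℂ H]
  [CompleteSpace H]

/-- coordinate projection on the direct sum -/
noncomputable def cpr (i : I) : PiLp 2 (fun _ : I => H) →L[ℂ] H := PiLp.proj 2 (fun _ : I => H) i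

theorem cpr_apply (i : I) (v : PiLp 2 (fun _ : I => H)) : cpr i v = v i := rfl

theorem cpr_adj (i : I) (h : H) : adjoint (cpr (H := H) i) h = WithLp.toLp 2 (Pi.single i h) := by
  refine ext_inner_right ℂ fun v => ?_
  rw [adjoint_inner_left, PiLp.inner_apply, Finset.sum_eq_single i]
  · simp [cpr_apply]
  · intro j _ hj
    simp [Pi.single_eq_of_ne hj]
  · simp

theorem cpr_mul_adj (i j : I) : cpr (H := H) i ∘L adjoint (cpr (H := H) j) = if i = j then 1 else 0 := by
  ext h
  rw [ContinuousLinearMap.comp_apply, cpr_adj, cpr_apply]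
  by_cases hij : i = j
  · subst hij; simp
  · simp [hij]

theorem cpr_sum : ∑ i : I, adjoint (cpr (H := H) i) ∘L cpr i = 1 := by
  ext v : 1
  refine ext_inner_left ℂ fun w => ?_
  rw [_root_.sum_apply, inner_sum, PiLp.inner_apply]
  refine Finset.sum_congr rfl fun i _ => ?_
  rw [ContinuousLinearMap.comp_apply, adjoint_inner_right]
  rfl

/-- block operator -/
noncomputable def blk (E : I → I → H →L[ℂ] H) : PiLp 2 (fun _ : I => H) →L[ℂ] PiLp 2 (fun _ : I => H) :=
  ∑ i, ∑ j, adjoint (cpr (H := H) i) ∘L E i j ∘L cpr j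

theorem cpr_blk (E : I → I → H →L[ℂ] H) (i : I) : cpr i ∘L blk E = ∑ j, E i j ∘L cpr j := by
  simp only [blk, comp_finsetSum, ← comp_assoc, cpr_mul_adj]
  rw [Finset.sum_eq_single i]
  · simp [one_def]
  · intro j _ hj
    simp [hj.symm]
  · simp

theorem blk_adj (E : I → I → H →L[ℂ] H) (j : I) :
    blk E ∘L adjoint (cpr (H := H) j) = ∑ i, adjoint (cpr (H := H) i) ∘L E i j := by
  simp only [blk, finsetSum_comp, comp_assoc, cpr_mul_adj]
  refine Finset.sum_congr rfl fun i _ => ?_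
  rw [Finset.sum_eq_single j]
  · simp [one_def]
  · intro j' _ hj
    simp [hj]
  · simp

theorem blk_nonneg (E : I → I → H →L[ℂ] H)
    (hE : ∀ ξ : I → H, 0 ≤ ∑ p, ∑ q, (⟪ξ p, (E p q) (ξ q)⟫ : ℂ)) : 0 ≤ blk E := by
  rw [nonneg_iff_isPositive, isPositive_iff_complex]
  intro v
  have h1 : ⟪v, blk E v⟫ = ∑ p, ∑ q, (⟪v p, (E p q) (v q)⟫ : ℂ) := by
    rw [PiLp.inner_apply]
    refine Finset.sum_congr rfl fun i _ => ?_
    have := congrArg (fun f => f v) (cpr_blk E i)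
    simp only [ContinuousLinearMap.comp_apply, _root_.sum_apply, cpr_apply] at this
    rw [this, inner_sum]
  have h2 := hE (fun i => v i)
  rw [← h1, Complex.le_def] at h2
  have h3 : ⟪blk E v, v⟫ = ⟪v, blk E v⟫ := by
    rw [← inner_conj_symm]
    exact Complex.conj_eq_iff_im.mpr h2.2.symm
  rw [h3]
  refine ⟨Complex.ext (by simp) (by simpa using h2.2), by simpa using h2.1⟩

theorem op_sqrt {K : Type*} [NormedAddCommGroup K] [InnerProductSpace ℂ K] [CompleteSpace K]
    (M : K →L[ℂ] K) (hM : 0 ≤ M) : ∃ R : K →L[ℂ] K, R ∘L R = M ∧ adjoint R = R ∧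
      ∀ D : K →L[ℂ] K, Commute M D → Commute R D := by
  refine ⟨CFC.sqrt M, CFC.sqrt_mul_sqrt_self M hM, ?_, fun D hD => hD.cfcₙ_nnreal NNReal.sqrt⟩
  have : IsSelfAdjoint (CFC.sqrt M) := IsSelfAdjoint.of_nonneg (CFC.sqrt_nonneg _)
  exact this.adjoint_eq

theorem exists_factor (E : I → I → H →L[ℂ] H)
    (hE : ∀ ξ : I → H, 0 ≤ ∑ p, ∑ q, (⟪ξ p, (E p q) (ξ q)⟫ : ℂ)) :
    ∃ V : I → I → H →L[ℂ] H, (∀ i j, E i j = ∑ s, adjoint (V s i) ∘L V s j) ∧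
      ∀ D : H →L[ℂ] H, (∀ i j, E i j ∘L D = D ∘L E i j) →
        ∀ s i, V s i ∘L D = D ∘L V s i ∧ adjoint (V s i) ∘L D = D ∘L adjoint (V s i) := by
  obtain ⟨R, hRR, hRs, hRc⟩ := op_sqrt (blk E) (blk_nonneg E hE)
  have hadj : ∀ s i, adjoint (cpr (H := H) s ∘L R ∘L adjoint (cpr (H := H) i)) =
      cpr (H := H) i ∘L R ∘L adjoint (cpr (H := H) s) := by
    intro s i
    rw [adjoint_comp, adjoint_comp, adjoint_adjoint, hRs, comp_assoc]
  refine ⟨fun s i => cpr (H := H) s ∘L R ∘L adjoint (cpr (H := H) i), ?_, ?_⟩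
  · intro i j
    have h1 : ∑ s, adjoint (cpr (H := H) s ∘L R ∘L adjoint (cpr (H := H) i)) ∘L
        (cpr (H := H) s ∘L R ∘L adjoint (cpr (H := H) j)) =
        cpr i ∘L R ∘L (∑ s, adjoint (cpr (H := H) s) ∘L cpr s) ∘L R ∘L adjoint (cpr (H := H) j) := by
      simp only [finsetSum_comp, comp_finsetSum, hadj, comp_assoc]
    rw [h1, cpr_sum]
    have h2 : cpr i ∘L R ∘L (1 : PiLp 2 (fun _ : I => H) →L[ℂ] _) ∘L R ∘L adjoint (cpr (H := H) j)
        = (cpr i ∘L (R ∘L R)) ∘L adjoint (cpr (H := H) j) := rfl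
    rw [h2, hRR, cpr_blk, finsetSum_comp]
    simp only [comp_assoc, cpr_mul_adj]
    rw [Finset.sum_eq_single j]
    · simp [one_def]
    · intro j' _ hj
      simp [hj]
    · simp
  · intro D hD
    set DD := blk (fun i j : I => if i = j then D else 0) with hDD
    have d1 : ∀ i : I, cpr i ∘L DD = D ∘L cpr i := by
      intro i
      rw [hDD, cpr_blk, Finset.sum_eq_single i]
      · simp
      · intro j _ hj
        simp [hj.symm]
      · simp
    have d2 : ∀ i : I, DD ∘L adjoint (cpr (H := H) i) = adjoint (cpr (H := H) i) ∘L D := by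
      intro i
      rw [hDD, blk_adj, Finset.sum_eq_single i]
      · simp
      · intro j _ hj
        simp [hj]
      · simp
    clear_value DD
    have hc : Commute (blk E) DD := by
      change blk E ∘L DD = DD ∘L blk E
      simp only [blk, finsetSum_comp, comp_finsetSum, comp_assoc, d1]
      simp only [← comp_assoc, d2]
      simp only [comp_assoc]
      refine Finset.sum_congr rfl fun i _ => Finset.sum_congr rfl fun j _ => ?_
      rw [← comp_assoc (E i j), hD, comp_assoc]
    have hcR : R ∘L DD = DD ∘L R := hRc DD hc
    have key : ∀ s i : I, (cpr (H := H) s ∘L R ∘L adjoint (cpr (H := H) i)) ∘L D =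
        D ∘L (cpr (H := H) s ∘L R ∘L adjoint (cpr (H := H) i)) := by
      intro s i
      rw [comp_assoc, comp_assoc, ← d2, ← comp_assoc R, hcR, ← comp_assoc, ← comp_assoc, d1]
      simp only [comp_assoc]
    intro s i
    refine ⟨key s i, ?_⟩
    rw [hadj]
    exact key i s

end opsqrt


section qcfeas
open scoped MatrixOrder

theorem nsq_inner {H : Type*} [NormedAddCommGroup H] [InnerProductSpace ℂ H] (v : H) :
    ((‖v‖ : ℝ) : ℂ) ^ 2 = ⟪v, v⟫ := (inner_self_eq_norm_sq_to_K (𝕜 := ℂ) v).symm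

variable {H : Type*} [NormedAddCommGroup H] [InnerProductSpace ℂ H] [CompleteSpace H]

theorem contr_est {X A S : Type*} [Fintype X] [Fintype A] [Fintype S] [DecidableEq X]
    (V : S → X × A → H →L[ℂ] H)
    (hV : ∀ x x', ∑ s, ∑ a, adjoint (V s (x, a)) ∘L V s (x', a) = if x = x' then 1 else 0)
    (T : S → H) (z : A → ℂ) :
    ∑ x, ‖∑ a, z a • ∑ s, adjoint (V s (x, a)) (T s)‖ ^ 2 ≤ (∑ s, ‖T s‖ ^ 2) * ∑ a, ‖z a‖ ^ 2 := by
  set u : X → H := fun x => ∑ a, z a • ∑ s, adjoint (V s (x, a)) (T s) with hu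
  set L : ℝ := ∑ x, ‖u x‖ ^ 2 with hL
  let η : S × A → H := fun p => ∑ x, V p.1 (x, p.2) (u x)
  have hη : ∑ p, ‖η p‖ ^ 2 = L := by
    have h1 : ((∑ p, ‖η p‖ ^ 2 : ℝ) : ℂ) = ((L : ℝ) : ℂ) := by
      rw [hL]
      push_cast
      simp only [nsq_inner] 
      have h2 : ∀ x x', ∑ p : S × A, ⟪V p.1 (x, p.2) (u x), V p.1 (x', p.2) (u x')⟫ =
          if x = x' then ⟪u x, u x'⟫ else 0 := by
        intro x x'
        have := congrArg (fun f => ⟪u x, f (u x')⟫) (hV x x')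
        simp only [_root_.sum_apply, inner_sum, ContinuousLinearMap.comp_apply, adjoint_inner_right] at this
        rw [Fintype.sum_prod_type, this]
        split_ifs <;> simp
      simp only [η, sum_inner, inner_sum]
      rw [Finset.sum_comm]
      refine Finset.sum_congr rfl fun x _ => ?_
      rw [Finset.sum_comm]
      rw [Finset.sum_eq_single x]
      · rw [h2]; simp
      · intro x' _ hx
        rw [h2, if_neg]
        first | exact hx | exact hx.symm
      · simp
    exact_mod_cast h1
  have hL1 : (L : ℂ) = ∑ p : S × A, z p.2 * ⟪η p, T p.1⟫ := by
    rw [hL]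
    push_cast
    simp only [nsq_inner]
    have h2 : ∀ x, ⟪u x, u x⟫ = ∑ p : S × A, z p.2 * ⟪V p.1 (x, p.2) (u x), T p.1⟫ := by
      intro x
      conv_lhs => rw [hu]
      rw [Fintype.sum_prod_type, Finset.sum_comm]
      simp only [inner_sum, inner_smul_right, Finset.mul_sum, adjoint_inner_right]
      rfl
    simp only [h2, η, sum_inner, Finset.mul_sum]
    rw [Finset.sum_comm]
  have hL0 : 0 ≤ L := Finset.sum_nonneg fun _ _ => by positivity
  have hL2 : L ≤ ∑ p : S × A, ‖η p‖ * (‖z p.2‖ * ‖T p.1‖) := by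
    have : ‖(L : ℂ)‖ ≤ ∑ p : S × A, ‖η p‖ * (‖z p.2‖ * ‖T p.1‖) := by
      rw [hL1]
      refine (norm_sum_le _ _).trans (Finset.sum_le_sum fun p _ => ?_)
      rw [norm_mul]
      calc _ ≤ ‖z p.2‖ * (‖η p‖ * ‖T p.1‖) := by gcongr; exact norm_inner_le_norm _ _
        _ = _ := by ring
    rwa [Complex.norm_real, Real.norm_of_nonneg hL0] at this
  have hL3 : L ^ 2 ≤ L * ((∑ s, ‖T s‖ ^ 2) * ∑ a, ‖z a‖ ^ 2) := by
    calc L ^ 2 ≤ (∑ p : S × A, ‖η p‖ * (‖z p.2‖ * ‖T p.1‖)) ^ 2 := by gcongr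
      _ ≤ (∑ p, ‖η p‖ ^ 2) * ∑ p : S × A, (‖z p.2‖ * ‖T p.1‖) ^ 2 := Finset.sum_mul_sq_le_sq_mul_sq _ _ _
      _ = _ := by
        rw [hη]
        congr 1
        rw [Finset.sum_mul_sum, Fintype.sum_prod_type]
        refine Finset.sum_congr rfl fun s _ => Finset.sum_congr rfl fun a _ => ?_
        ring
  have h0 : 0 ≤ (∑ s, ‖T s‖ ^ 2) * ∑ a, ‖z a‖ ^ 2 := by positivity
  rcases hL0.eq_or_lt with h | h
  · rw [← h]; exact h0
  · rw [sq] at hL3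
    exact le_of_mul_le_mul_left hL3 h

theorem quad_gram {α : Type*} [Fintype α] (v : α → H) (z : α → ℂ) :
    star z ⬝ᵥ ((Matrix.of fun a a' => ⟪v a, v a'⟫) *ᵥ z) = ((‖∑ a, z a • v a‖ ^ 2 : ℝ) : ℂ) := by
  push_cast
  rw [nsq_inner]
  simp only [sum_inner, inner_sum, inner_smul_left, inner_smul_right, dotProduct, mulVec, Finset.mul_sum, of_apply,
    Pi.star_apply, Complex.star_def]
  rw [Finset.sum_comm]
  refine Finset.sum_congr rfl fun a _ => Finset.sum_congr rfl fun b _ => ?_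
  ring

theorem half_block {X Y A B S T : Type*} [Fintype X] [Fintype Y] [Fintype A] [Fintype B] [Fintype S] [Fintype T]
    [DecidableEq X] [DecidableEq Y] [DecidableEq A] [DecidableEq B]
    (V : S → X × A → H →L[ℂ] H) (W : T → Y × B → H →L[ℂ] H)
    (hV : ∀ x x', ∑ s, ∑ a, adjoint (V s (x, a)) ∘L V s (x', a) = if x = x' then 1 else 0)
    (hW : ∀ x x', ∑ s, ∑ a, adjoint (W s (x, a)) ∘L W s (x', a) = if x = x' then 1 else 0)
    (ψ : H) (hψ : ‖ψ‖ = 1) (R : S → T → H) (hR : ∑ t, ∑ s, ‖R s t‖ ^ 2 ≤ 1) (C : Matrix (X × A) (Y × B) ℂ)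
    (hC : ∀ i j, C i j = ∑ t, ⟪∑ s, adjoint (V s i) (R s t), W t j ψ⟫) :
    ∃ (P : Matrix (X × A) (X × A) ℂ) (Q : Matrix (Y × B) (Y × B) ℂ),
      (fromBlocks P C Cᴴ Q).PosSemidef ∧ outTr P ≤ 1 ∧ inTr Q ≤ 1 := by
  let p : T → X × A → H := fun t i => ∑ s, adjoint (V s i) (R s t)
  let q : T → Y × B → H := fun t j => W t j ψ
  refine ⟨Matrix.of fun i i' => ∑ t, ⟪p t i, p t i'⟫, Matrix.of fun j j' => ∑ t, ⟪q t j, q t j'⟫, ?_, ?_, ?_⟩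
  · have h1 : (∑ t, Matrix.gram ℂ (Sum.elim (p t) (q t))).PosSemidef :=
      posSemidef_sum _ fun t _ => posSemidef_gram ℂ _
    convert h1 using 1
    ext u v
    rcases u with u | u <;> rcases v with v | v <;> simp [Matrix.sum_apply, gram_apply, hC, p, q]
  · rw [Matrix.le_iff]
    refine PosSemidef.of_dotProduct_mulVec_nonneg ?_ ?_
    · refine isHermitian_one.sub ?_
      ext a a'
      simp [outTr, inner_conj_symm]
    · intro z
      rw [sub_mulVec, dotProduct_sub, one_mulVec]
      have e1 : outTr (Matrix.of fun i i' => ∑ t, ⟪p t i, p t i'⟫) =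
          ∑ t, ∑ x, Matrix.of fun a a' => ⟪p t (x, a), p t (x, a')⟫ := by
        ext a a'
        simp only [outTr, of_apply, Matrix.sum_apply]
        rw [Finset.sum_comm]
      rw [e1, sum_mulVec, dotProduct_sum]
      simp only [sum_mulVec, dotProduct_sum, quad_gram]
      have e2 : star z ⬝ᵥ z = ((∑ a, ‖z a‖ ^ 2 : ℝ) : ℂ) := by
        push_cast
        simp only [dotProduct, Pi.star_apply, Complex.star_def, Complex.conj_mul']
      rw [e2, sub_nonneg]
      have e3 : ∑ t, ∑ x, ‖∑ a, z a • p t (x, a)‖ ^ 2 ≤ ∑ a, ‖z a‖ ^ 2 := by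
        calc _ ≤ ∑ t, (∑ s, ‖R s t‖ ^ 2) * ∑ a, ‖z a‖ ^ 2 :=
              Finset.sum_le_sum fun t _ => contr_est V hV (fun s => R s t) z
          _ = (∑ t, ∑ s, ‖R s t‖ ^ 2) * ∑ a, ‖z a‖ ^ 2 := by rw [Finset.sum_mul]
          _ ≤ 1 * ∑ a, ‖z a‖ ^ 2 := by gcongr
          _ = _ := one_mul _
      exact_mod_cast e3
  · refine le_of_eq ?_
    ext y y'
    have := congrArg (fun f => ⟪ψ, f ψ⟫) (hW y y')
    simp only [_root_.sum_apply, inner_sum, ContinuousLinearMap.comp_apply, adjoint_inner_right] at this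
    simp only [inTr, of_apply, q]
    rw [Finset.sum_comm, this, Matrix.one_apply]
    split_ifs
    · simp [inner_self_eq_norm_sq_to_K, hψ]
    · simp

theorem feas_of_comm {X Y A B S T : Type*} [Fintype X] [Fintype Y] [Fintype A] [Fintype B] [Fintype S] [Fintype T]
    [DecidableEq X] [DecidableEq Y] [DecidableEq A] [DecidableEq B]
    (V : S → X × A → H →L[ℂ] H) (W : T → Y × B → H →L[ℂ] H)
    (hV : ∀ x x', ∑ s, ∑ a, adjoint (V s (x, a)) ∘L V s (x', a) = if x = x' then 1 else 0)
    (hW : ∀ x x', ∑ s, ∑ a, adjoint (W s (x, a)) ∘L W s (x', a) = if x = x' then 1 else 0)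
    (hVW : ∀ s i t j, V s i ∘L W t j = W t j ∘L V s i)
    (ψ : H) (hψ : ‖ψ‖ = 1) (R : S → T → H) (hR : ∑ s, ∑ t, ‖R s t‖ ^ 2 ≤ 1) :
    Feas (Matrix.of fun (i : X × A) (j : Y × B) => ∑ s, ∑ t, ⟪R s t, V s i (W t j ψ)⟫) := by
  set C : Matrix (X × A) (Y × B) ℂ := Matrix.of fun i j => ∑ s, ∑ t, ⟪R s t, V s i (W t j ψ)⟫ with hC
  obtain ⟨P, Q, h1, h2, h3⟩ := half_block V W hV hW ψ hψ R (by rwa [Finset.sum_comm]) C (by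
    intro i j
    simp only [hC, of_apply, sum_inner, adjoint_inner_left]
    rw [Finset.sum_comm])
  obtain ⟨P', Q', h1', h2', h3'⟩ := half_block W V hW hV ψ hψ (fun t s => R s t) hR Cᵀ (by
    intro j i
    simp only [hC, of_apply, sum_inner, adjoint_inner_left, transpose_apply]
    refine Finset.sum_congr rfl fun s _ => Finset.sum_congr rfl fun t _ => ?_
    congr 1
    exact congrArg (fun f => f ψ) (hVW s i t j))
  refine ⟨P, Q'ᵀ, P'ᵀ, Q, h1, ?_, h2, ?_, ?_, h3⟩
  · have := h1'.transpose.submatrix Sum.swap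
    have e : fromBlocks Q'ᵀ C Cᴴ P'ᵀ = (fromBlocks P' Cᵀ (Matrix.conjTranspose Cᵀ) Q')ᵀ.submatrix Sum.swap Sum.swap := by
      ext u v
      rcases u with u | u <;> rcases v with v | v <;> rfl
    rw [e]
    exact this
  · rw [Matrix.le_iff] at h3' ⊢
    have := h3'.transpose
    rwa [transpose_sub, transpose_one] at this
  · rw [Matrix.le_iff] at h2' ⊢
    have := h2'.transpose
    rwa [transpose_sub, transpose_one] at this

end qcfeas


section final
open scoped MatrixOrder

variable {X Y A B : Type} [Fintype X] [Fintype Y] [Fintype A] [Fintype B]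
    [DecidableEq X] [DecidableEq Y] [DecidableEq A] [DecidableEq B]

theorem stoch_factor {X A H : Type*} [Fintype X] [Fintype A] [DecidableEq X] [DecidableEq A]
    [NormedAddCommGroup H] [InnerProductSpace ℂ H] [CompleteSpace H]
    {E : X → X → A → A → (H →L[ℂ] H)} (hE : IsStochasticOperatorMatrix E) :
    ∃ V : X × A → X × A → H →L[ℂ] H,
      (∀ i j : X × A, E i.1 j.1 i.2 j.2 = ∑ s, adjoint (V s i) ∘L V s j) ∧
      (∀ x x', ∑ s, ∑ a, adjoint (V s (x, a)) ∘L V s (x', a) = if x = x' then 1 else 0) ∧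
      ∀ D : H →L[ℂ] H, (∀ i j : X × A, E i.1 j.1 i.2 j.2 ∘L D = D ∘L E i.1 j.1 i.2 j.2) →
        ∀ s i, V s i ∘L D = D ∘L V s i ∧ adjoint (V s i) ∘L D = D ∘L adjoint (V s i) := by
  obtain ⟨V, h1, h2⟩ := exists_factor (fun i j : X × A => E i.1 j.1 i.2 j.2) hE.1
  refine ⟨V, h1, ?_, h2⟩
  intro x x'
  rw [Finset.sum_comm, ← hE.2 x x']
  exact Finset.sum_congr rfl fun a _ => (h1 (x, a) (x', a)).symm

theorem qc_feas {Γ : Matrix (X × Y) (X × Y) ℂ →ₗ[ℂ] Matrix (A × B) (A × B) ℂ} (h : IsQCCorrelation Γ)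
    (G : Matrix (X × A) (Y × B) ℂ) :
    ∃ val : ℝ, 0 ≤ val ∧ qf G (kerOf Γ) = val ∧ ∃ C, Feas C ∧ pair G C = ((√val : ℝ) : ℂ) := by
  obtain ⟨ℍ, ψ, E, F, hψ, hE, hF, hc, hΓ⟩ := h
  obtain ⟨V, hV1, hV2, hV3⟩ := stoch_factor hE
  obtain ⟨W, hW1, hW2, hW3⟩ := stoch_factor hF
  have hVF : ∀ s i (u v : Y × B), V s i ∘L F u.1 v.1 u.2 v.2 = F u.1 v.1 u.2 v.2 ∘L V s i ∧
      adjoint (V s i) ∘L F u.1 v.1 u.2 v.2 = F u.1 v.1 u.2 v.2 ∘L adjoint (V s i) := by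
    intro s i u v
    exact hV3 (F u.1 v.1 u.2 v.2) (fun i j => hc _ _ _ _ _ _ _ _) s i
  have hVW : ∀ s i t j, V s i ∘L W t j = W t j ∘L V s i := fun s i t j =>
    ((hW3 (V s i) (fun u v => (hVF s i u v).1.symm) t j).1).symm
  have hVF2 : ∀ s i (u v : Y × B) (φ : ℍ.carrier), V s i (F u.1 v.1 u.2 v.2 φ) = F u.1 v.1 u.2 v.2 (V s i φ) :=
    fun s i u v φ => congrArg (fun f => f φ) (hVF s i u v).1
  have hK : ∀ u v : (X × A) × (Y × B), kerOf Γ u v =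
      ∑ s, ∑ t, ⟪V s u.1 (W t u.2 ψ), V s v.1 (W t v.2 ψ)⟫ := by
    intro u v
    simp only [kerOf, of_apply]
    rw [← single_kron, hΓ, of_apply, hV1 u.1 v.1]
    simp only [ContinuousLinearMap.comp_apply, _root_.sum_apply, inner_sum, adjoint_inner_right]
    refine Finset.sum_congr rfl fun s _ => ?_
    rw [hVF2, hW1]
    simp only [ContinuousLinearMap.comp_apply, _root_.sum_apply, inner_sum, adjoint_inner_right]
    refine Finset.sum_congr rfl fun t _ => ?_
    have e : ∀ i j (φ : ℍ.carrier), W t j (V s i φ) = V s i (W t j φ) :=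
      fun i j φ => congrArg (fun f => f φ) (hVW s i t j).symm
    rw [e, e]
  let T : X × A → Y × B → ℍ.carrier := fun s t => ∑ v : (X × A) × (Y × B), G v.1 v.2 • V s v.1 (W t v.2 ψ)
  set val : ℝ := ∑ s, ∑ t, ‖T s t‖ ^ 2 with hval
  have hval0 : 0 ≤ val := Finset.sum_nonneg fun _ _ => Finset.sum_nonneg fun _ _ => by positivity
  refine ⟨val, hval0, ?_, _, feas_of_comm V W hV2 hW2 hVW ψ hψ (fun s t => (((√val)⁻¹ : ℝ) : ℂ) • T s t) ?_, ?_⟩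
  · have e : kerOf Γ = ∑ s, ∑ t, Matrix.of fun u v => ⟪V s u.1 (W t u.2 ψ), V s v.1 (W t v.2 ψ)⟫ := by
      ext u v
      simp only [hK, Matrix.sum_apply, of_apply]
    rw [qf, e, hval]
    simp only [sum_mulVec, dotProduct_sum]
    push_cast
    refine Finset.sum_congr rfl fun s _ => Finset.sum_congr rfl fun t _ => ?_
    have := quad_gram (fun v : (X × A) × (Y × B) => V s v.1 (W t v.2 ψ)) (fun v => G v.1 v.2)
    push_cast at this
    exact this
  · simp only [norm_smul, mul_pow, ← Finset.mul_sum, ← hval, Complex.norm_real, norm_inv, inv_pow, Real.norm_eq_abs,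
      sq_abs, Real.sq_sqrt hval0]
    exact inv_mul_le_one
  · have e : pair G (Matrix.of fun (i : X × A) (j : Y × B) =>
        ∑ s, ∑ t, ⟪(((√val)⁻¹ : ℝ) : ℂ) • T s t, V s i (W t j ψ)⟫) =
        (((√val)⁻¹ : ℝ) : ℂ) * ∑ s, ∑ t, ⟪T s t, T s t⟫ := by
      have e1 : ∀ s t, ⟪T s t, T s t⟫ = ∑ v : (X × A) × (Y × B), G v.1 v.2 * ⟪T s t, V s v.1 (W t v.2 ψ)⟫ := by
        intro s t
        conv_lhs => rhs; simp only [T]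
        rw [inner_sum]
        simp only [inner_smul_right]
      simp only [e1, pair, of_apply, inner_smul_left, Complex.conj_ofReal]
      rw [← Fintype.sum_prod_type' (f := fun i j => G i j * ∑ s, ∑ t, ((((√val)⁻¹ : ℝ) : ℂ) * ⟪T s t, V s i (W t j ψ)⟫))]
      simp only [Finset.mul_sum]
      rw [Finset.sum_comm]
      refine Finset.sum_congr rfl fun s _ => ?_
      rw [Finset.sum_comm]
      refine Finset.sum_congr rfl fun t _ => Finset.sum_congr rfl fun v _ => ?_
      ring
    rw [e]
    have e2 : ∑ s, ∑ t, ⟪T s t, T s t⟫ = (val : ℂ) := by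
      rw [hval]
      push_cast
      simp only [nsq_inner]
    rw [e2, ← Complex.ofReal_mul, mul_comm, ← div_eq_mul_inv, Real.div_sqrt]

end final

/-- For a projection quantum game with rank-`n` projection, the
quantum commuting value is at most `4 n` times the quantum value. -/
theorem statement14
    {X Y A B : Type} [Fintype X] [Fintype Y] [Fintype A] [Fintype B]
    [Nonempty X] [Nonempty Y] [Nonempty A] [Nonempty B]
    [DecidableEq X] [DecidableEq Y] [DecidableEq A] [DecidableEq B]
    {HR : Type*} [NormedAddCommGroup HR] [InnerProductSpace ℂ HR] [CompleteSpace HR]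
    [TopologicalSpace.SeparableSpace HR]
    (ξ : X × Y → HR) (hξ : ∑ w : X × Y, ‖ξ w‖ ^ 2 = 1)
    (n : ℕ) (hn : 1 ≤ n)
    (γ : Fin n → (A × B → HR))
    (hγ : ∀ k l : Fin n,
      ∑ p : A × B, (⟪γ k p, γ l p⟫ : ℂ) = if k = l then 1 else 0) :
    sSup {t : ℝ | ∃ Γ, IsQCCorrelation Γ ∧ (t : ℂ) = gameValue Γ ξ n γ}
      ≤ 4 * n * sSup {t : ℝ | ∃ Γ, IsQCorrelation Γ ∧ (t : ℂ) = gameValue Γ ξ n γ} := by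
  refine Real.sSup_le ?_ (mul_nonneg (by positivity) (qval_nonneg ξ n γ))
  rintro t ⟨Γ, hΓ, ht⟩
  set w := sSup {t : ℝ | ∃ Γ, IsQCorrelation Γ ∧ (t : ℂ) = gameValue Γ ξ n γ} with hw
  have hw0 : 0 ≤ w := qval_nonneg ξ n γ
  have key : ∀ k, ∃ val : ℝ, qf (gm ξ (γ k)) (kerOf Γ) = val ∧ val ≤ 4 * w := by
    intro k
    obtain ⟨val, hv0, hv, C, hC, hp⟩ := qc_feas hΓ (gm ξ (γ k))
    refine ⟨val, hv, ?_⟩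
    have h1 := feas_bound ξ n γ k C hC
    rw [hp, Complex.norm_real, Real.norm_of_nonneg (Real.sqrt_nonneg _), ← hw] at h1
    have h2 : (√val) ^ 2 ≤ (2 * √w) ^ 2 := pow_le_pow_left₀ (Real.sqrt_nonneg _) h1 2
    rw [mul_pow, Real.sq_sqrt hv0, Real.sq_sqrt hw0] at h2
    linarith
  choose val hval hle using key
  have h3 : (t : ℂ) = ((∑ k, val k : ℝ) : ℂ) := by
    rw [ht, gameValue_eq]
    push_cast
    exact Finset.sum_congr rfl fun k _ => hval k
  have h4 : t = ∑ k, val k := by exact_mod_cast h3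
  rw [h4]
  calc ∑ k, val k ≤ ∑ _k : Fin n, 4 * w := Finset.sum_le_sum fun k _ => hle k
    _ = 4 * n * w := by
      simp only [Finset.sum_const, Finset.card_univ, Fintype.card_fin, nsmul_eq_mul]
      ring
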